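/- arXiv:2412.05942 — 3 statements merged into one kernel-verified Lean document; each statement's English description precedes it below -/
import Mathlib

section
/- Let r ≥ 1 and let B be an r×r doubly stochastic real matrix (nonnegative entries, every row sum and every column sum equal to 1) all of whose entries are strictly less than 1. Then ∏_{i,j} (1 − B(i,j)) ≤ Σ_{σ ∈ S_r} ∏_{i=1}^r B(i,σ(i))·(1 − B(i,σ(i))) ≤ 2^{r/2} · ∏_{i,j} (1 − B(i,j)). (Equivalently, the matrix B̂ with entries B̂(i,j) = B(i,j)(1−B(i,j)) / (∏_{i',j'} (1−B(i',j')))^{1/r} satisfies 1 ≤ perm(B̂) ≤ 2^{r/2}.) -/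
open scoped BigOperators

noncomputable section

/-- The sum over all matchings contained in the edge list `F` between the vertex sets `R` and `C`,
where an edge `e` has weight `a e.1 e.2` and the unmatched vertices have weights `u` and `v`. -/
def matchSum {ι κ : Type*} [DecidableEq ι] [DecidableEq κ] (a : ι → κ → ℝ) (u : ι → ℝ)
    (v : κ → ℝ) : List (ι × κ) → Finset ι → Finset κ → ℝ
  | [], R, C => (∏ i ∈ R, u i) * ∏ j ∈ C, v j
  | e :: F, R, C => matchSum a u v F R C +
      if e.1 ∈ R ∧ e.2 ∈ C then
        a e.1 e.2 * matchSum a u v F (R.erase e.1) (C.erase e.2) else 0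

namespace matchSum

variable {ι κ : Type*} [DecidableEq ι] [DecidableEq κ] {a : ι → κ → ℝ} {u u' : ι → ℝ}
  {v v' : κ → ℝ}

theorem nonneg (ha : ∀ i j, 0 ≤ a i j) (hu : ∀ i, 0 ≤ u i) (hv : ∀ j, 0 ≤ v j)
    (F : List (ι × κ)) (R : Finset ι) (C : Finset κ) : 0 ≤ matchSum a u v F R C := by
  induction F generalizing R C with
  | nil =>
    exact mul_nonneg (Finset.prod_nonneg fun i _ => hu i) (Finset.prod_nonneg fun j _ => hv j)
  | cons e F ih =>
    rw [matchSum]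
    refine add_nonneg (ih R C) ?_
    split_ifs
    · exact mul_nonneg (ha _ _) (ih _ _)
    · exact le_rfl

theorem swap (F : List (ι × κ)) (R : Finset ι) (C : Finset κ) :
    matchSum (fun j i => a i j) v u (F.map Prod.swap) C R = matchSum a u v F R C := by
  induction F generalizing R C with
  | nil => simp [matchSum, mul_comm]
  | cons e F ih => simp only [List.map_cons, matchSum, ih, Prod.fst_swap, Prod.snd_swap, and_comm]

theorem congr_weights (F : List (ι × κ)) {R : Finset ι} {C : Finset κ}
    (hu : ∀ i ∈ R, u i = u' i) (hv : ∀ j ∈ C, v j = v' j) :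
    matchSum a u v F R C = matchSum a u' v' F R C := by
  induction F generalizing R C with
  | nil => simp only [matchSum, Finset.prod_congr rfl hu, Finset.prod_congr rfl hv]
  | cons e F ih =>
    rw [matchSum, matchSum, ih hu hv, ih (fun i hi => hu i (Finset.mem_of_mem_erase hi))
      (fun j hj => hv j (Finset.mem_of_mem_erase hj))]

theorem expand_left {F : List (ι × κ)} (hF : F.Nodup) {R : Finset ι} {i : ι} (hi : i ∈ R)
    (C : Finset κ) :
    matchSum a u v F R C = u i * matchSum a u v F (R.erase i) C +
      ∑ k ∈ C, (if (i, k) ∈ F then a i k else 0) * matchSum a u v F (R.erase i) (C.erase k) := by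
  induction F generalizing R C with
  | nil => simp [matchSum, ← Finset.mul_prod_erase R u hi, mul_assoc]
  | cons e F ih =>
    obtain ⟨i', j'⟩ := e
    obtain ⟨he, hF⟩ := List.nodup_cons.1 hF
    have ih := fun {R : Finset ι} (hi : i ∈ R) C => ih hF hi C
    by_cases hii : i' = i
    · subst hii
      simp only [matchSum, hi, true_and, Finset.notMem_erase, false_and, if_false, add_zero]
      rw [ih hi C, add_assoc]
      congr 1
      have hs : ∀ k, (if (i', k) ∈ (i', j') :: F then a i' k else 0) =
          (if (i', k) ∈ F then a i' k else 0) + (if k = j' then a i' k else 0) := by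
        intro k
        by_cases hk : k = j'
        · subst hk; simp [he]
        · simp [hk]
      simp only [hs, add_mul, Finset.sum_add_distrib, ite_mul, zero_mul, Finset.sum_ite_eq']
    · have hs : ∀ k, ((i, k) ∈ (i', j') :: F) = ((i, k) ∈ F) := by
        intro k; simp [Ne.symm hii]
      simp only [hs, matchSum]
      by_cases hR : i' ∈ R ∧ j' ∈ C
      · have hi2 : i ∈ R.erase i' := Finset.mem_erase.2 ⟨Ne.symm hii, hi⟩
        rw [if_pos hR, ih hi C, ih hi2 (C.erase j')]
        simp only [Finset.mem_erase, hR.1, hR.2, hii, ne_eq, not_false_eq_true, and_self,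
          true_and, and_true, if_true, mul_add, Finset.sum_add_distrib]
        rw [← Finset.add_sum_erase C (fun k => (if (i, k) ∈ F then a i k else 0) *
          (if ¬ j' = k then _ else _)) hR.2]
        rw [Finset.erase_right_comm (a := i')]
        have : ∑ x ∈ C.erase j', (if (i, x) ∈ F then a i x else 0) *
            (if ¬ j' = x then a i' j' * matchSum a u v F ((R.erase i).erase i')
              ((C.erase x).erase j') else 0) =
            a i' j' * ∑ x ∈ C.erase j', (if (i, x) ∈ F then a i x else 0) *
              matchSum a u v F ((R.erase i).erase i') ((C.erase j').erase x) := by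
          rw [Finset.mul_sum]
          refine Finset.sum_congr rfl fun x hx => ?_
          rw [if_pos (Finset.ne_of_mem_erase hx).symm, Finset.erase_right_comm (a := x)]
          ring
        rw [this]
        simp
        ring
      · have h2 : ¬ (i' ∈ R.erase i ∧ j' ∈ C) := fun h => hR ⟨Finset.mem_of_mem_erase h.1, h.2⟩
        have h3 : ∀ k, ¬ (i' ∈ R.erase i ∧ j' ∈ C.erase k) := fun k h =>
          hR ⟨Finset.mem_of_mem_erase h.1, Finset.mem_of_mem_erase h.2⟩
        simp only [if_neg hR, if_neg h2, if_neg (h3 _), add_zero]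
        exact ih hi C

theorem update_left {F : List (ι × κ)} (hF : F.Nodup) {R : Finset ι} {i : ι} (hi : i ∈ R)
    (C : Finset κ) (h : ∀ x, x ≠ i → u' x = u x) :
    matchSum a u' v F R C = matchSum a u v F R C +
      (u' i - u i) * matchSum a u v F (R.erase i) C := by
  have key : ∀ C, matchSum a u' v F (R.erase i) C = matchSum a u v F (R.erase i) C := fun C =>
    congr_weights F (fun x hx => h x (Finset.ne_of_mem_erase hx)) fun _ _ => rfl
  rw [expand_left hF hi C, expand_left (u := u) hF hi C]
  simp only [key]
  ring

theorem update_right {F : List (ι × κ)} (hF : F.Nodup) (R : Finset ι) {C : Finset κ} {j : κ}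
    (hj : j ∈ C) (h : ∀ x, x ≠ j → v' x = v x) :
    matchSum a u v' F R C = matchSum a u v F R C +
      (v' j - v j) * matchSum a u v F R (C.erase j) := by
  simpa only [swap] using
    update_left (a := fun j i => a i j) (v := u) (hF.map Prod.swap_injective) hj R h

/-- Two vertices on the same side are negatively correlated as soon as opposite vertices are
positively correlated after one deletion. -/
theorem mul_le_mul_left_of_opposite (ha : ∀ i j, 0 ≤ a i j) {F : List (ι × κ)} (hF : F.Nodup)
    {R : Finset ι} {C : Finset κ} {i i' : ι} (hi : i ∈ R) (hne : i ≠ i')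
    (H : ∀ k ∈ C,
      matchSum a u v F ((R.erase i).erase i') C * matchSum a u v F (R.erase i) (C.erase k) ≤
      matchSum a u v F (R.erase i) C * matchSum a u v F ((R.erase i).erase i') (C.erase k)) :
    matchSum a u v F R C * matchSum a u v F ((R.erase i).erase i') C ≤
      matchSum a u v F (R.erase i) C * matchSum a u v F (R.erase i') C := by
  have hi2 : i ∈ R.erase i' := Finset.mem_erase.2 ⟨hne, hi⟩
  rw [expand_left hF hi C, expand_left hF hi2 C, Finset.erase_right_comm (a := i'), add_mul,
    mul_add, Finset.sum_mul, Finset.mul_sum]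
  refine add_le_add (le_of_eq (by ring)) (Finset.sum_le_sum fun k hk => ?_)
  have hw : 0 ≤ (if (i, k) ∈ F then a i k else 0) := by
    split_ifs
    exacts [ha _ _, le_rfl]
  nlinarith [mul_le_mul_of_nonneg_left (H k hk) hw]

/-- Vertices on opposite sides are positively correlated. -/
theorem mul_le_mul_opposite (ha : ∀ i j, 0 ≤ a i j) (hu : ∀ i, 0 ≤ u i) (hv : ∀ j, 0 ≤ v j)
    {F : List (ι × κ)} (hF : F.Nodup) {R : Finset ι} {C : Finset κ} {i : ι} {j : κ}
    (hi : i ∈ R) (hj : j ∈ C) :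
    matchSum a u v F (R.erase i) C * matchSum a u v F R (C.erase j) ≤
      matchSum a u v F R C * matchSum a u v F (R.erase i) (C.erase j) := by
  induction hn : R.card generalizing R C i j with
  | zero => simp_all
  | succ n ih =>
    have hc : (R.erase i).card = n := by rw [Finset.card_erase_of_mem hi, hn]; rfl
    have same : ∀ k ∈ C.erase j,
        matchSum a u v F (R.erase i) C * matchSum a u v F (R.erase i) ((C.erase j).erase k) ≤
        matchSum a u v F (R.erase i) (C.erase j) * matchSum a u v F (R.erase i) (C.erase k) := by
      intro k hk
      have := mul_le_mul_left_of_opposite (a := fun j i => a i j) (u := v) (v := u)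
        (fun j i => ha i j) (hF.map Prod.swap_injective) (R := C) (C := R.erase i) hj
        (Finset.ne_of_mem_erase hk).symm
      simp only [swap] at this
      refine this fun x hx => ?_
      exact (mul_comm _ _).trans_le (ih hx hk hc)
    rw [expand_left hF hi C, expand_left hF hi (C.erase j), mul_add, add_mul, Finset.mul_sum,
      Finset.sum_mul, ← Finset.add_sum_erase C _ hj]
    have hw : ∀ k, 0 ≤ (if (i, k) ∈ F then a i k else 0) := by
      intro k
      split_ifs
      exacts [ha _ _, le_rfl]
    refine add_le_add (le_of_eq (by ring)) (le_add_of_nonneg_of_le ?_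
      (Finset.sum_le_sum fun k hk => ?_))
    · exact mul_nonneg (mul_nonneg (hw _) (nonneg ha hu hv _ _ _)) (nonneg ha hu hv _ _ _)
    · nlinarith [mul_le_mul_of_nonneg_left (same k hk) (hw k)]

end matchSum

/-- If a bilinear function with positively correlated coefficients dominates `K * (s * t) ^ b`, then
so does the value obtained by matching the two variables with each other. -/
theorem one_sub_mul_le_of_forall_mul_rpow_le {A B C D K b : ℝ} (hA : 0 ≤ A) (hB : 0 ≤ B)
    (hC : 0 ≤ C) (hD : 0 ≤ D) (hBC : B * C ≤ A * D) (hb : 0 ≤ b) (hb1 : b < 1)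
    (H : ∀ s t : ℝ, 0 < s → 0 < t →
      K * (s * t) ^ b ≤ A + b * s * B + b * t * C + b * s * (b * t) * D) :
    (1 - b) * K ≤ A + b * (1 - b) * D := by
  have pos_case : ∀ A D : ℝ, 0 < A → 0 < D → B * C ≤ A * D → (∀ s t : ℝ, 0 < s → 0 < t →
      K * (s * t) ^ b ≤ A + b * s * B + b * t * C + b * s * (b * t) * D) →
      (1 - b) * K ≤ A + b * (1 - b) * D := by
    intro A D hA hD hBC H
    have hAD : 0 < A * D := mul_pos hA hD
    have hb' : 0 < 1 - b := by linarith
    obtain ⟨B', C', hB', hC', hB, hC, hBC'⟩ : ∃ B' C' : ℝ, 0 < B' ∧ 0 < C' ∧ B ≤ B' ∧ C ≤ C' ∧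
        B' * C' = A * D := by
      rcases hB.eq_or_lt with h | h
      · refine ⟨A * D / (C + 1), C + 1, by positivity, by positivity, ?_, by linarith, ?_⟩
        · rw [← h]; positivity
        · field_simp
      · exact ⟨B, A * D / B, h, by positivity, le_rfl, (le_div_iff₀ h).2 (by linarith),
          by field_simp⟩
    have h := H (A / ((1 - b) * B')) (A / ((1 - b) * C')) (by positivity) (by positivity)
    have h1 : A / ((1 - b) * B') * (A / ((1 - b) * C')) = A / ((1 - b) ^ 2 * D) := by
      rw [div_mul_div_comm, div_eq_div_iff (by positivity) (by positivity)]
      linear_combination (-(A * (1 - b) ^ 2)) * hBC'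
    have h2 : A + b * (A / ((1 - b) * B')) * B + b * (A / ((1 - b) * C')) * C +
        b * (A / ((1 - b) * B')) * (b * (A / ((1 - b) * C'))) * D ≤ A / (1 - b) ^ 2 := by
      have e1 : b * (A / ((1 - b) * B')) * B ≤ b * A / (1 - b) := by
        calc _ ≤ b * (A / ((1 - b) * B')) * B' := by gcongr
          _ = _ := by field_simp
      have e2 : b * (A / ((1 - b) * C')) * C ≤ b * A / (1 - b) := by
        calc _ ≤ b * (A / ((1 - b) * C')) * C' := by gcongr
          _ = _ := by field_simp
      have e3 : b * (A / ((1 - b) * B')) * (b * (A / ((1 - b) * C'))) * D =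
          b ^ 2 * A / (1 - b) ^ 2 := by
        calc _ = b ^ 2 * (A / ((1 - b) * B') * (A / ((1 - b) * C'))) * D := by ring
          _ = _ := by rw [h1]; field_simp
      have e4 : A / (1 - b) ^ 2 = A + b * A / (1 - b) + b * A / (1 - b) +
          b ^ 2 * A / (1 - b) ^ 2 := by field_simp; ring
      linarith
    set x := (1 - b) ^ 2 * D / A with hx
    have hx0 : 0 < x := by positivity
    have h3 : A / ((1 - b) ^ 2 * D) = x⁻¹ := by rw [hx, inv_div]
    rw [h1, h3, Real.inv_rpow hx0.le] at h
    have hK : K ≤ A / (1 - b) ^ 2 * x ^ b := by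
      have := h.trans h2
      rwa [← div_eq_mul_inv, div_le_iff₀ (by positivity)] at this
    have amgm : x ^ b ≤ (1 - b) + b * x := by
      have := Real.geom_mean_le_arith_mean2_weighted hb'.le hb zero_le_one hx0.le (by ring)
      simpa using this
    calc (1 - b) * K ≤ (1 - b) * (A / (1 - b) ^ 2 * ((1 - b) + b * x)) := by
          gcongr
          exact hK.trans (by gcongr)
      _ = A + b * (1 - b) * D := by rw [hx]; field_simp
  refine le_of_forall_pos_le_add fun ε hε => ?_
  have h := pos_case (A + ε / 2) (D + ε / 2) (by positivity) (by positivity)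
    (by nlinarith) (fun s t hs ht => (H s t hs ht).trans ?_)
  · nlinarith [mul_nonneg hb (sub_nonneg.2 hb1.le), mul_nonneg hb hb]
  · have : 0 ≤ b * s * (b * t) * (ε / 2) := by positivity
    linarith

section Permutations

variable {ι : Type*} [Fintype ι] [DecidableEq ι]

/-- The permutations that agree with `τ` outside of `R`. -/
def permsAgreeingOff (R : Finset ι) (τ : Equiv.Perm ι) : Finset (Equiv.Perm ι) :=
  Finset.univ.filter fun σ => ∀ x ∉ R, σ x = τ x

theorem permsAgreeingOff_empty (τ : Equiv.Perm ι) : permsAgreeingOff ∅ τ = {τ} := by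
  ext σ
  simp [permsAgreeingOff, Equiv.ext_iff]

theorem permsAgreeingOff_univ (τ : Equiv.Perm ι) :
    permsAgreeingOff Finset.univ τ = Finset.univ := by
  simp [permsAgreeingOff]

theorem image_eq_of_mem_permsAgreeingOff {R : Finset ι} {σ τ : Equiv.Perm ι}
    (h : σ ∈ permsAgreeingOff R τ) : R.image σ = R.image τ := by
  simp only [permsAgreeingOff, Finset.mem_filter, Finset.mem_univ, true_and] at h
  have hc : Rᶜ.image σ = Rᶜ.image τ :=
    Finset.image_congr fun x hx => h x (by simpa using hx)
  have hcompl : ∀ ρ : Equiv.Perm ι, Rᶜ.image ρ = (R.image ρ)ᶜ := fun ρ => by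
    ext x
    simp [Finset.mem_image, ← Equiv.eq_symm_apply]
  rwa [hcompl, hcompl, compl_inj_iff] at hc

theorem swap_mul_mem_permsAgreeingOff {R : Finset ι} {i : ι} (hi : i ∈ R) (τ : Equiv.Perm ι) {j : ι}
    (hj : j ∈ R.image τ) : Equiv.swap (τ i) j * τ ∈ permsAgreeingOff R τ := by
  simp only [permsAgreeingOff, Finset.mem_filter, Finset.mem_univ, true_and, Equiv.Perm.mul_apply]
  intro x hx
  obtain ⟨y, hy, rfl⟩ := Finset.mem_image.1 hj
  refine Equiv.swap_apply_of_ne_of_ne (fun h => hx ?_) fun h => hx ?_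
  · rwa [τ.injective h]
  · rwa [τ.injective h]

/-- Expansion of a sum over permutations along the value at `i`. -/
theorem sum_permsAgreeingOff_insert {M : Type*} [AddCommMonoid M] (f : Equiv.Perm ι → M)
    {R : Finset ι} {i : ι} (hi : i ∉ R) (τ : Equiv.Perm ι) :
    ∑ σ ∈ permsAgreeingOff (insert i R) τ, f σ = ∑ j ∈ (insert i R).image τ,
      ∑ σ ∈ permsAgreeingOff R (Equiv.swap (τ i) j * τ), f σ := by
  rw [← Finset.sum_fiberwise_of_maps_to (g := fun σ : Equiv.Perm ι => σ i)
    (t := (insert i R).image τ)]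
  · refine Finset.sum_congr rfl fun j hj => Finset.sum_congr ?_ fun _ _ => rfl
    have h := swap_mul_mem_permsAgreeingOff (Finset.mem_insert_self i R) τ hj
    simp only [permsAgreeingOff, Finset.mem_filter, Finset.mem_univ, true_and,
      Finset.mem_insert, not_or] at h
    ext σ
    simp only [permsAgreeingOff, Finset.mem_filter, Finset.mem_univ, true_and,
      Finset.mem_insert, not_or]
    constructor
    · rintro ⟨h1, h2⟩ x hx
      by_cases hxi : x = i
      · subst hxi; simp [h2]
      · rw [h1 x ⟨hxi, hx⟩, h x ⟨hxi, hx⟩]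
    · intro h1
      exact ⟨fun x hx => by rw [h1 x hx.2, h x hx], by rw [h1 i hi]; simp⟩
  · intro σ hσ
    rw [← image_eq_of_mem_permsAgreeingOff hσ]
    exact Finset.mem_image_of_mem _ (Finset.mem_insert_self i R)

omit [Fintype ι] in
theorem erase_image_insert {R : Finset ι} {i : ι} (hi : i ∉ R) (τ : Equiv.Perm ι) :
    ((insert i R).image τ).erase (τ i) = R.image τ := by
  rw [Finset.image_insert, Finset.erase_insert]
  simpa using hi

theorem matchSum_zero_eq_sum_perm (a : ι → ι → ℝ) {F : List (ι × ι)} (hF : F.Nodup)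
    (hmem : ∀ e, e ∈ F) (R : Finset ι) (τ : Equiv.Perm ι) :
    matchSum a 0 0 F R (R.image τ) = ∑ σ ∈ permsAgreeingOff R τ, ∏ i ∈ R, a i (σ i) := by
  induction R using Finset.induction_on generalizing τ with
  | empty =>
    have : ∀ F : List (ι × ι), matchSum a 0 0 F ∅ ∅ = 1 := by
      intro F
      induction F with
      | nil => simp [matchSum]
      | cons e F ih => simp [matchSum, ih]
    simp [permsAgreeingOff_empty, this]
  | insert i R hi ih =>
    rw [matchSum.expand_left hF (Finset.mem_insert_self i R), sum_permsAgreeingOff_insert _ hi,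
      Pi.zero_apply, zero_mul, zero_add]
    refine Finset.sum_congr rfl fun j hj => ?_
    have h := image_eq_of_mem_permsAgreeingOff
      (swap_mul_mem_permsAgreeingOff (Finset.mem_insert_self i R) τ hj)
    have h2 := erase_image_insert hi (Equiv.swap (τ i) j * τ)
    rw [h, Equiv.Perm.mul_apply, Equiv.swap_apply_left] at h2
    rw [if_pos (hmem _), Finset.erase_insert hi, h2, ih, Finset.mul_sum]
    refine Finset.sum_congr rfl fun σ hσ => ?_
    have hσi : σ i = j := by
      simp only [permsAgreeingOff, Finset.mem_filter, Finset.mem_univ, true_and] at hσ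
      rw [hσ i hi]; simp
    rw [Finset.prod_insert hi, hσi]

end Permutations

section LowerBound

variable {ι : Type*} [Fintype ι] [DecidableEq ι]

theorem prod_mul_prod_rpow_le_matchSum {B : ι → ι → ℝ} (hB0 : ∀ i j, 0 ≤ B i j)
    (hrow : ∀ i, ∑ j, B i j = 1) (hcol : ∀ j, ∑ i, B i j = 1) (hlt : ∀ i j, B i j < 1)
    {F : List (ι × ι)} (hF : F.Nodup) {y z : ι → ι → ℝ} (hy : ∀ i j, 0 < y i j)
    (hz : ∀ i j, 0 < z i j) :
    (∏ e ∈ F.toFinset, (1 - B e.1 e.2)) *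
        ∏ e ∈ F.toFinsetᶜ, (y e.1 e.2 * z e.1 e.2) ^ B e.1 e.2 ≤
      matchSum (fun i j => B i j * (1 - B i j))
        (fun i => ∑ j, if (i, j) ∈ F then 0 else B i j * y i j)
        (fun j => ∑ i, if (i, j) ∈ F then 0 else B i j * z i j) F Finset.univ Finset.univ := by
  induction F generalizing y z with
  | nil =>
    simp only [List.toFinset_nil, Finset.prod_empty, one_mul, Finset.compl_empty, matchSum,
      List.not_mem_nil, if_false]
    have h : ∀ e : ι × ι, (y e.1 e.2 * z e.1 e.2) ^ B e.1 e.2 =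
        y e.1 e.2 ^ B e.1 e.2 * z e.1 e.2 ^ B e.1 e.2 := fun e =>
      Real.mul_rpow (hy _ _).le (hz _ _).le
    simp only [h, Finset.prod_mul_distrib]
    refine mul_le_mul ?_ ?_ ?_ ?_
    · rw [Fintype.prod_prod_type]
      exact Finset.prod_le_prod
        (fun i _ => Finset.prod_nonneg fun j _ => Real.rpow_nonneg (hy _ _).le _) fun i _ =>
        Real.geom_mean_le_arith_mean_weighted _ _ _ (fun j _ => hB0 i j) (hrow i)
          fun j _ => (hy i j).le
    · rw [Fintype.prod_prod_type_right]
      exact Finset.prod_le_prod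
        (fun i _ => Finset.prod_nonneg fun j _ => Real.rpow_nonneg (hz _ _).le _) fun j _ =>
        Real.geom_mean_le_arith_mean_weighted _ _ _ (fun i _ => hB0 i j) (hcol j)
          fun i _ => (hz i j).le
    · exact Finset.prod_nonneg fun j _ => Real.rpow_nonneg (hz _ _).le _
    · exact Finset.prod_nonneg fun i _ => Finset.sum_nonneg fun j _ =>
        mul_nonneg (hB0 _ _) (hy _ _).le
  | cons e F ih =>
    obtain ⟨i, j⟩ := e
    obtain ⟨he, hF⟩ := List.nodup_cons.1 hF
    set a : ι → ι → ℝ := fun i j => B i j * (1 - B i j) with ha_def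
    have ha : ∀ i j, 0 ≤ a i j := fun i j => mul_nonneg (hB0 i j) (sub_nonneg.2 (hlt i j).le)
    set u : ι → ℝ := fun i' => ∑ j', if (i', j') ∈ (i, j) :: F then 0 else B i' j' * y i' j'
    set v : ι → ℝ := fun j' => ∑ i', if (i', j') ∈ (i, j) :: F then 0 else B i' j' * z i' j'
    have hu : ∀ i, 0 ≤ u i := fun i => Finset.sum_nonneg fun j _ => by
      split_ifs
      exacts [le_rfl, mul_nonneg (hB0 _ _) (hy _ _).le]
    have hv : ∀ i, 0 ≤ v i := fun i => Finset.sum_nonneg fun j _ => by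
      split_ifs
      exacts [le_rfl, mul_nonneg (hB0 _ _) (hz _ _).le]
    have hi := Finset.mem_univ i
    have hj := Finset.mem_univ j
    have hnn := matchSum.nonneg ha hu hv F
    rw [matchSum, if_pos ⟨hi, hj⟩]
    have hcompl : F.toFinsetᶜ = insert (i, j) (((i, j) :: F).toFinsetᶜ) := by
      ext e
      by_cases h : e = (i, j)
      · subst h; simp [he]
      · simp [h]
    have key := one_sub_mul_le_of_forall_mul_rpow_le
      (K := (∏ e ∈ F.toFinset, (1 - B e.1 e.2)) *
        ∏ e ∈ ((i, j) :: F).toFinsetᶜ, (y e.1 e.2 * z e.1 e.2) ^ B e.1 e.2)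
      (hnn Finset.univ Finset.univ) (hnn (Finset.univ.erase i) Finset.univ)
      (hnn Finset.univ (Finset.univ.erase j)) (hnn (Finset.univ.erase i) (Finset.univ.erase j))
      (matchSum.mul_le_mul_opposite ha hu hv hF hi hj) (hB0 i j) (hlt i j) ?_
    · rw [List.toFinset_cons, Finset.prod_insert (by simpa using he), mul_assoc]
      rw [List.toFinset_cons] at key
      exact key
    intro s t hs ht
    have upd_pos : ∀ {w : ι → ι → ℝ} {c : ℝ}, (∀ i j, 0 < w i j) → 0 < c →
        ∀ i' j', 0 < (if (i', j') = (i, j) then c else w i' j') := by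
      intro w c hw hc i' j'
      split_ifs
      exacts [hc, hw _ _]
    have h := ih hF (upd_pos hy hs) (upd_pos hz ht)
    set u' : ι → ℝ := fun i' => ∑ j', if (i', j') ∈ F then 0 else
      B i' j' * (if (i', j') = (i, j) then s else y i' j')
    set v' : ι → ℝ := fun j' => ∑ i', if (i', j') ∈ F then 0 else
      B i' j' * (if (i', j') = (i, j) then t else z i' j')
    have split : ∀ (w : ι → ι → ℝ) (c : ℝ) (i' j' : ι), (if (i', j') ∈ F then 0 else
        B i' j' * (if (i', j') = (i, j) then c else w i' j')) =
        (if (i', j') ∈ (i, j) :: F then 0 else B i' j' * w i' j') +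
          if (i', j') = (i, j) then B i j * c else 0 := by
      intro w c i' j'
      by_cases h : (i', j') = (i, j)
      · obtain ⟨rfl, rfl⟩ := Prod.mk.inj h
        simp [he]
      · simp [h]
    have hu' : ∀ i', u' i' = u i' + if i' = i then B i j * s else 0 := by
      intro i'
      simp only [u', u]
      rw [Finset.sum_congr rfl (fun j' _ => split y s i' j'), Finset.sum_add_distrib]
      simp [ite_and]
    have hv' : ∀ j', v' j' = v j' + if j' = j then B i j * t else 0 := by
      intro j'
      simp only [v', v]
      rw [Finset.sum_congr rfl (fun i' _ => split z t i' j'), Finset.sum_add_distrib]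
      simp [ite_and]
    rw [matchSum.update_left hF hi _ (u := u) (fun x hx => by simp [hu', hx]),
      matchSum.update_right hF _ hj (v := v) (v' := v') (fun x hx => by simp [hv', hx]),
      matchSum.update_right hF _ hj (v := v) (v' := v') (fun x hx => by simp [hv', hx])] at h
    have e1 : u' i - u i = B i j * s := by simp [hu']
    have e2 : v' j - v j = B i j * t := by simp [hv']
    rw [e1, e2, hcompl, Finset.prod_insert (by simp)] at h
    have e3 : ∏ x ∈ ((i, j) :: F).toFinsetᶜ,
        ((if (x.1, x.2) = (i, j) then s else y x.1 x.2) *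
          if (x.1, x.2) = (i, j) then t else z x.1 x.2) ^ B x.1 x.2 =
        ∏ e ∈ ((i, j) :: F).toFinsetᶜ, (y e.1 e.2 * z e.1 e.2) ^ B e.1 e.2 := by
      refine Finset.prod_congr rfl fun x hx => ?_
      have hx : (x.1, x.2) ≠ (i, j) := by
        rintro h
        simp [← h] at hx
      rw [if_neg hx, if_neg hx]
    rw [e3] at h
    simp only [if_true] at h
    linarith

/-- Schrijver's lower bound for the permanent. -/
theorem prod_one_sub_le_sum_perm {B : ι → ι → ℝ} (hB0 : ∀ i j, 0 ≤ B i j)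
    (hrow : ∀ i, ∑ j, B i j = 1) (hcol : ∀ j, ∑ i, B i j = 1) (hlt : ∀ i j, B i j < 1) :
    ∏ i, ∏ j, (1 - B i j) ≤ ∑ σ : Equiv.Perm ι, ∏ i, B i (σ i) * (1 - B i (σ i)) := by
  have hF := Finset.nodup_toList (Finset.univ : Finset (ι × ι))
  have hmem : ∀ e, e ∈ (Finset.univ : Finset (ι × ι)).toList := by simp
  have h := prod_mul_prod_rpow_le_matchSum hB0 hrow hcol hlt hF (y := fun _ _ => 1)
    (z := fun _ _ => 1) (fun _ _ => one_pos) (fun _ _ => one_pos)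
  have hs := matchSum_zero_eq_sum_perm (fun i j => B i j * (1 - B i j)) hF hmem Finset.univ 1
  rw [permsAgreeingOff_univ] at hs
  rw [← hs, ← Fintype.prod_prod_type' fun i j => 1 - B i j]
  simpa [Pi.zero_def] using h

end LowerBound

section IntervalInequality

open Real

/-- The excess that the interval `[a, b]` contributes to the entropy sum of a partition of `[0, 1]`. -/
def intervalExcess (a b : ℝ) : ℝ :=
  a * log a - a * log b + ((1 - b) * log (1 - b) - (1 - b) * log (1 - a)) -
    2 * ((1 - b + a) * log (1 - b + a))

theorem intervalExcess_one_sub (a b : ℝ) :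
    intervalExcess (1 - b) (1 - a) = intervalExcess a b := by
  simp only [intervalExcess, sub_sub_cancel]
  rw [add_comm a (1 - b)]
  ring

theorem supportLine_le_mul_log_sub {x t r : ℝ} (hx : 0 ≤ x) (ht : 0 < t) (hr : 0 < r) :
    x * log r + x - (x + t) * r ≤ x * log x - x * log (x + t) := by
  rcases hx.eq_or_lt with rfl | hx
  · simp; positivity
  · have h := log_le_sub_one_of_pos (show 0 < (x + t) * r / x by positivity)
    rw [log_div (by positivity) hx.ne', log_mul (by positivity) hr.ne'] at h
    have := mul_le_mul_of_nonneg_left h hx.le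
    have e : x * ((x + t) * r / x - 1) = (x + t) * r - x := by field_simp
    linarith

theorem supportLine_eq_mul_log_sub {x t : ℝ} (hx : 0 < x) (ht : 0 < t) :
    x * log (x / (x + t)) + x - (x + t) * (x / (x + t)) = x * log x - x * log (x + t) := by
  rw [log_div hx.ne' (by positivity)]
  field_simp
  ring

/-- For intervals of fixed length the excess is a convex function of the left end point. -/
theorem intervalExcess_le_affine {a l u t p q : ℝ} (hl : 0 ≤ l) (hla : l ≤ a) (hau : a ≤ u)
    (ht : 0 < t) (hu : u + t ≤ 1) (h1 : intervalExcess l (l + t) ≤ p + q * l)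
    (h2 : intervalExcess u (u + t) ≤ p + q * u) : intervalExcess a (a + t) ≤ p + q * a := by
  rcases hla.eq_or_lt with rfl | hla
  · exact h1
  rcases hau.eq_or_lt with rfl | hau
  · exact h2
  have ha : 0 < a := by linarith
  have hc : 0 < 1 - t - a := by linarith
  have hr : 0 < a / (a + t) := by positivity
  have hr' : 0 < (1 - t - a) / (1 - t - a + t) := by positivity
  have L1 := supportLine_le_mul_log_sub hl ht hr
  have L2 := supportLine_le_mul_log_sub (show 0 ≤ 1 - t - l by linarith) ht hr'
  have U1 := supportLine_le_mul_log_sub (show 0 ≤ u by linarith) ht hr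
  have U2 := supportLine_le_mul_log_sub (show 0 ≤ 1 - t - u by linarith) ht hr'
  have A1 := supportLine_eq_mul_log_sub ha ht
  have A2 := supportLine_eq_mul_log_sub hc ht
  have e : ∀ x, intervalExcess x (x + t) = (x * log x - x * log (x + t)) +
      ((1 - t - x) * log (1 - t - x) - (1 - t - x) * log (1 - t - x + t)) -
      2 * ((1 - t) * log (1 - t)) := by
    intro x
    simp only [intervalExcess]
    rw [show 1 - (x + t) = 1 - t - x by ring, show 1 - t - x + t = 1 - x by ring,
      show 1 - t - x + x = 1 - t by ring]
  rw [e] at h1 h2 ⊢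
  generalize log (a / (a + t)) = g at *
  generalize log ((1 - t - a) / (1 - t - a + t)) = g' at *
  generalize a / (a + t) = r at *
  generalize (1 - t - a) / (1 - t - a + t) = r' at *
  generalize 2 * ((1 - t) * log (1 - t)) = c at *
  have H1 := mul_le_mul_of_nonneg_left (add_le_add (add_le_add L1 L2) h1) (sub_nonneg.2 hau.le)
  have H2 := mul_le_mul_of_nonneg_left (add_le_add (add_le_add U1 U2) h2) (sub_nonneg.2 hla.le)
  rw [← A1, ← A2]
  have hpos : 0 < u - l := by linarith
  refine le_of_mul_le_mul_left ?_ hpos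
  linarith

theorem intervalExcess_zero_left (b : ℝ) : intervalExcess 0 b = -((1 - b) * log (1 - b)) := by
  simp [intervalExcess]
  ring

theorem intervalExcess_zero_left_le {b : ℝ} (hb1 : b ≤ 1) : intervalExcess 0 b ≤ b := by
  rw [intervalExcess_zero_left]
  rcases hb1.eq_or_lt with rfl | h
  · simp
  · have h' : 0 < 1 - b := by linarith
    have := mul_le_mul_of_nonneg_left (one_sub_inv_le_log_of_pos h') h'.le
    rw [mul_sub, mul_inv_cancel₀ h'.ne'] at this
    linarith

theorem intervalExcess_zero_left_le_tangent {b : ℝ} (hb1 : b ≤ 1) :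
    intervalExcess 0 b ≤ log 2 / 2 + (1 - log 2) * (b - 1 / 2) := by
  rw [intervalExcess_zero_left]
  rcases hb1.eq_or_lt with rfl | h
  · have := log_two_lt_d9
    norm_num; linarith
  · have h' : 0 < 1 - b := by linarith
    have := mul_le_mul_of_nonneg_left
      (one_sub_inv_le_log_of_pos (show 0 < 2 * (1 - b) by positivity)) h'.le
    rw [log_mul two_ne_zero h'.ne', mul_inv, mul_sub] at this
    have e : (1 - b) * (2⁻¹ * (1 - b)⁻¹) = 1 / 2 := by field_simp
    rw [e] at this
    linarith

theorem intervalExcess_le_sub {a b : ℝ} (ha : 0 ≤ a) (hab : a < b) (hb : b ≤ 1) :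
    intervalExcess a b ≤ b - a := by
  have h0 := intervalExcess_zero_left_le (show b - a ≤ 1 by linarith)
  have := intervalExcess_le_affine (a := a) (l := 0) (u := 1 - (b - a)) (t := b - a) (p := b - a)
    (q := 0) le_rfl ha (by linarith) (by linarith) (by linarith) (by simpa using h0) ?_
  · simpa using this
  · rw [← intervalExcess_one_sub]
    simpa using h0

theorem convexOn_intervalExcess_quarter :
    ConvexOn ℝ (Set.Icc (1 / 4) 1) (intervalExcess (1 / 4)) := by
  have hint : interior (Set.Icc (1 / 4 : ℝ) 1) = Set.Ioo (1 / 4) 1 := interior_Icc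
  refine convexOn_of_hasDerivWithinAt2_nonneg (convex_Icc _ _)
    (f' := fun b => -(1 / 4 * b⁻¹) + (-(log (1 - b) + 1) + log (1 - 1 / 4)) +
      2 * (log (1 - b + 1 / 4) + 1))
    (f'' := fun b => 1 / 4 * (b ^ 2)⁻¹ + (1 - b)⁻¹ - 2 * (1 - b + 1 / 4)⁻¹) ?_ ?_ ?_ ?_
  · have h1 : ContinuousOn (fun b : ℝ => log b) (Set.Icc (1 / 4) 1) :=
      continuousOn_id.log fun x hx => by
        have := hx.1
        simp only [id]
        linarith
    have h2 : Continuous fun b : ℝ => (1 - b) * log (1 - b) :=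
      continuous_mul_log.comp (continuous_const.sub continuous_id)
    have h3 : Continuous fun b : ℝ => (1 - b + 1 / 4) * log (1 - b + 1 / 4) :=
      continuous_mul_log.comp ((continuous_const.sub continuous_id).add continuous_const)
    have h4 : Continuous fun b : ℝ => (1 - b) * log (1 - 1 / 4) :=
      (continuous_const.sub continuous_id).mul continuous_const
    exact ((continuousOn_const.sub (continuousOn_const.mul h1)).add
      (h2.sub h4).continuousOn).sub (continuousOn_const.mul h3.continuousOn)
  · intro b hb
    rw [hint] at hb ⊢
    have hb0 : b ≠ 0 := by linarith [hb.1]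
    have hb1 : 1 - b ≠ 0 := by linarith [hb.2]
    have hb2 : 1 - b + 1 / 4 ≠ 0 := by linarith [hb.2]
    have d1 : HasDerivAt (fun b : ℝ => 1 - b) (-1) b := by
      simpa using (hasDerivAt_id b).const_sub 1
    have d2 : HasDerivAt (fun b : ℝ => 1 - b + 1 / 4) (-1) b := d1.add_const _
    have h := ((((hasDerivAt_log hb0).const_mul (1 / 4)).const_sub (1 / 4 * log (1 / 4))).add
      (((hasDerivAt_mul_log hb1).comp b d1).sub (d1.mul_const (log (1 - 1 / 4))))).sub
        (((hasDerivAt_mul_log hb2).comp b d2).const_mul 2)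
    refine (h.congr_deriv ?_).hasDerivWithinAt
    ring
  · intro b hb
    rw [hint] at hb ⊢
    have hb0 : b ≠ 0 := by linarith [hb.1]
    have hb1 : 1 - b ≠ 0 := by linarith [hb.2]
    have hb2 : 1 - b + 1 / 4 ≠ 0 := by linarith [hb.2]
    have d1 : HasDerivAt (fun b : ℝ => 1 - b) (-1) b := by
      simpa using (hasDerivAt_id b).const_sub 1
    have d2 : HasDerivAt (fun b : ℝ => 1 - b + 1 / 4) (-1) b := d1.add_const _
    have h := ((((hasDerivAt_inv hb0).const_mul (1 / 4)).neg.add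
      (((d1.log hb1).add_const 1).neg.add_const (log (1 - 1 / 4)))).add
        (((d2.log hb2).add_const 1).const_mul 2))
    refine (h.congr_deriv ?_).hasDerivWithinAt
    field_simp
    ring
  · intro b hb
    rw [hint] at hb
    have hb0 : 0 < b := by linarith [hb.1]
    have hb1 : 0 < 1 - b := by linarith [hb.2]
    have hb2 : 0 < 1 - b + 1 / 4 := by linarith [hb.2]
    have : 1 / 4 * (b ^ 2)⁻¹ + (1 - b)⁻¹ - 2 * (1 - b + 1 / 4)⁻¹ =
        (5 / 16 - 9 / 16 * b - b ^ 2 / 2 + b ^ 3) / (b ^ 2 * (1 - b) * (1 - b + 1 / 4)) := by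
      field_simp
      ring
    rw [this]
    refine div_nonneg ?_ (by positivity)
    nlinarith [mul_nonneg hb0.le (sq_nonneg (b - 63 / 100)), sq_nonneg (b - 63 / 100)]

theorem three_mul_log_two_sub_one_le_log_three : 3 * log 2 - 1 ≤ log 3 := by
  have h : log (8 / 3) ≤ 1 := by
    rw [log_le_iff_le_exp (by norm_num)]
    linarith [exp_one_gt_d9]
  rw [log_div (by norm_num) (by norm_num), show (8 : ℝ) = 2 ^ 3 by norm_num, log_pow] at h
  push_cast at h
  linarith

theorem log_one_quarter : log (1 / 4) = -(2 * log 2) := by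
  rw [one_div, log_inv, show (4 : ℝ) = 2 ^ 2 by norm_num, log_pow]
  push_cast
  ring

theorem intervalExcess_quarter_quarter : intervalExcess (1 / 4) (1 / 4) = 0 := by
  norm_num [intervalExcess]

theorem intervalExcess_quarter_three_quarters :
    intervalExcess (1 / 4) (3 / 4) = log 2 - log 3 / 2 := by
  have h3 : log (3 / 4) = log 3 - 2 * log 2 := by
    rw [log_div (by norm_num) (by norm_num), show (4 : ℝ) = 2 ^ 2 by norm_num, log_pow]
    push_cast
    ring
  have h2 : log (1 / 2) = -log 2 := by rw [one_div, log_inv]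
  rw [intervalExcess, show (1 : ℝ) - 3 / 4 = 1 / 4 by norm_num,
    show (1 : ℝ) - 1 / 4 = 3 / 4 by norm_num, show (1 / 4 : ℝ) + 1 / 4 = 1 / 2 by norm_num, h3, h2,
    log_one_quarter]
  ring

theorem intervalExcess_quarter_one : intervalExcess (1 / 4) 1 = log 2 / 2 := by
  rw [intervalExcess]
  norm_num only [log_one_quarter, log_one]
  ring

theorem intervalExcess_quarter_le {b : ℝ} (h1 : 1 / 4 ≤ b) (h2 : b ≤ 3 / 4) :
    intervalExcess (1 / 4) b ≤ (1 - log 2) * (b - 1 / 4) := by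
  have h := convexOn_intervalExcess_quarter.2
    (show (1 / 4 : ℝ) ∈ Set.Icc (1 / 4) 1 by norm_num)
    (show (3 / 4 : ℝ) ∈ Set.Icc (1 / 4) 1 by norm_num)
    (show 0 ≤ (3 / 4 - b) * 2 by linarith) (show 0 ≤ (b - 1 / 4) * 2 by linarith) (by ring)
  rw [intervalExcess_quarter_quarter, intervalExcess_quarter_three_quarters] at h
  simp only [smul_eq_mul] at h
  rw [show (3 / 4 - b) * 2 * (1 / 4) + (b - 1 / 4) * 2 * (3 / 4) = b by ring] at h
  nlinarith [three_mul_log_two_sub_one_le_log_three]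

theorem intervalExcess_quarter_le' {b : ℝ} (h1 : 3 / 4 ≤ b) (h2 : b ≤ 1) :
    intervalExcess (1 / 4) b ≤ (1 - log 2) / 2 + (3 * log 2 - 1) * (b - 3 / 4) := by
  have h := convexOn_intervalExcess_quarter.2
    (show (3 / 4 : ℝ) ∈ Set.Icc (1 / 4) 1 by norm_num)
    (show (1 : ℝ) ∈ Set.Icc (1 / 4) 1 by norm_num)
    (show 0 ≤ (1 - b) * 4 by linarith) (show 0 ≤ (b - 3 / 4) * 4 by linarith) (by ring)
  rw [intervalExcess_quarter_one, intervalExcess_quarter_three_quarters] at h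
  simp only [smul_eq_mul] at h
  rw [show (1 - b) * 4 * (3 / 4) + (b - 3 / 4) * 4 * 1 = b by ring] at h
  nlinarith [three_mul_log_two_sub_one_le_log_three, log_two_lt_d9]

/-- A piecewise linear function whose increments dominate `intervalExcess`. -/
def excessPotential (x : ℝ) : ℝ :=
  if x ≤ 1 / 4 then (3 * log 2 - 1) * x
  else if x ≤ 3 / 4 then log 2 / 2 + (1 - log 2) * (x - 1 / 2)
  else log 2 - (3 * log 2 - 1) * (1 - x)

theorem excessPotential_of_le {x : ℝ} (h : x ≤ 1 / 4) :
    excessPotential x = (3 * log 2 - 1) * x := if_pos h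

theorem excessPotential_of_mem {x : ℝ} (h : 1 / 4 ≤ x) (h' : x ≤ 3 / 4) :
    excessPotential x = log 2 / 2 + (1 - log 2) * (x - 1 / 2) := by
  unfold excessPotential
  split_ifs
  · rw [show x = 1 / 4 by linarith]; ring
  · rfl

theorem excessPotential_of_ge {x : ℝ} (h : 3 / 4 ≤ x) :
    excessPotential x = log 2 - (3 * log 2 - 1) * (1 - x) := by
  unfold excessPotential
  split_ifs
  · linarith
  · rw [show x = 3 / 4 by linarith]; ring
  · rfl

theorem excessPotential_one_sub (x : ℝ) : excessPotential (1 - x) = log 2 - excessPotential x := by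
  rcases le_total x (1 / 4) with h | h
  · rw [excessPotential_of_le h, excessPotential_of_ge (by linarith)]; ring
  rcases le_total x (3 / 4) with h' | h'
  · rw [excessPotential_of_mem h h', excessPotential_of_mem (by linarith) (by linarith)]; ring
  · rw [excessPotential_of_ge h', excessPotential_of_le (by linarith)]; ring

theorem intervalExcess_zero_left_le_potential {b : ℝ} (hb : 0 ≤ b) (hb1 : b ≤ 1) :
    intervalExcess 0 b ≤ excessPotential b := by
  have hL := log_two_gt_d9
  rcases le_total b (1 / 4) with h | h
  · rw [excessPotential_of_le h]
    nlinarith [intervalExcess_zero_left_le hb1]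
  have := intervalExcess_zero_left_le_tangent hb1
  rcases le_total b (3 / 4) with h' | h'
  · rwa [excessPotential_of_mem h h']
  · rw [excessPotential_of_ge h']
    nlinarith

theorem intervalExcess_quarter_le_potential {b : ℝ} (hb : 1 / 4 ≤ b) (hb1 : b ≤ 1) :
    intervalExcess (1 / 4) b ≤ excessPotential b - excessPotential (1 / 4) := by
  rw [excessPotential_of_le le_rfl]
  rcases le_total b (3 / 4) with h' | h'
  · rw [excessPotential_of_mem hb h']
    linarith [intervalExcess_quarter_le hb h']
  · rw [excessPotential_of_ge h']
    linarith [intervalExcess_quarter_le' h' hb1]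

theorem intervalExcess_one_right_le_potential {a : ℝ} (ha : 0 ≤ a) (ha1 : a ≤ 1) :
    intervalExcess a 1 ≤ log 2 - excessPotential a := by
  rw [← intervalExcess_one_sub, ← excessPotential_one_sub, sub_self]
  exact intervalExcess_zero_left_le_potential (by linarith) (by linarith)

theorem intervalExcess_three_quarters_le_potential {a : ℝ} (ha : 0 ≤ a) (ha1 : a ≤ 3 / 4) :
    intervalExcess a (3 / 4) ≤ excessPotential (3 / 4) - excessPotential a := by
  have h := intervalExcess_quarter_le_potential (b := 1 - a) (by linarith) (by linarith)
  rw [show (1 / 4 : ℝ) = 1 - 3 / 4 by norm_num, intervalExcess_one_sub, excessPotential_one_sub,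
    excessPotential_one_sub] at h
  linarith

theorem intervalExcess_le_of_le_quarter_of_mem {a b : ℝ} (ha : 0 ≤ a) (hab : a < b)
    (ha4 : a ≤ 1 / 4) (hb : 1 / 4 ≤ b) (hb4 : b ≤ 3 / 4) :
    intervalExcess a b ≤ excessPotential b - excessPotential a := by
  have hL := log_two_gt_d9
  rw [excessPotential_of_le ha4, excessPotential_of_mem hb hb4]
  have main := intervalExcess_le_affine (a := a) (l := max 0 (1 / 4 - (b - a)))
    (u := min (1 / 4) (3 / 4 - (b - a))) (t := b - a)
    (p := log 2 / 2 + (1 - log 2) * (b - a - 1 / 2)) (q := 1 - log 2 - (3 * log 2 - 1))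
    (le_max_left _ _) (max_le ha (by linarith)) (le_min ha4 (by linarith)) (by linarith)
    (by linarith [min_le_right (1 / 4) (3 / 4 - (b - a))]) ?_ ?_
  · rw [show a + (b - a) = b by ring] at main
    linarith
  · rcases le_total (1 / 4) (b - a) with h | h
    · rw [max_eq_left (by linarith), zero_add]
      have := intervalExcess_zero_left_le_potential (b := b - a) (by linarith) (by linarith)
      rw [excessPotential_of_mem h (by linarith)] at this
      linarith
    · rw [max_eq_right (by linarith), sub_add_cancel]
      have := intervalExcess_le_sub (a := 1 / 4 - (b - a)) (b := 1 / 4) (by linarith) (by linarith)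
        (by norm_num)
      nlinarith
  · rcases le_total (b - a) (1 / 2) with h | h
    · rw [min_eq_left (by linarith)]
      have := intervalExcess_quarter_le_potential (b := 1 / 4 + (b - a)) (by linarith)
        (by linarith)
      rw [excessPotential_of_mem (by linarith) (by linarith), excessPotential_of_le le_rfl] at this
      linarith
    · rw [min_eq_right (by linarith), sub_add_cancel]
      have := intervalExcess_three_quarters_le_potential (a := 3 / 4 - (b - a)) (by linarith)
        (by linarith)
      rw [excessPotential_of_mem (by norm_num) le_rfl, excessPotential_of_le (by linarith)] at this
      linarith

theorem intervalExcess_le_of_mem {a b : ℝ} (ha : 1 / 4 ≤ a) (hab : a < b) (hb : b ≤ 3 / 4) :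
    intervalExcess a b ≤ excessPotential b - excessPotential a := by
  rw [excessPotential_of_mem ha (by linarith), excessPotential_of_mem (by linarith) hb]
  have main := intervalExcess_le_affine (a := a) (l := 1 / 4) (u := 3 / 4 - (b - a)) (t := b - a)
    (p := (1 - log 2) * (b - a)) (q := 0) (by norm_num) ha (by linarith) (by linarith)
    (by linarith) ?_ ?_
  · rw [show a + (b - a) = b by ring] at main
    linarith
  · have := intervalExcess_quarter_le (b := 1 / 4 + (b - a)) (by linarith) (by linarith)
    linarith
  · have := intervalExcess_three_quarters_le_potential (a := 3 / 4 - (b - a)) (by linarith)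
      (by linarith)
    rw [excessPotential_of_mem (by norm_num) le_rfl,
      excessPotential_of_mem (by linarith) (by linarith)] at this
    rw [sub_add_cancel]
    linarith

theorem intervalExcess_le_of_le_quarter_of_ge {a b : ℝ} (ha : 0 ≤ a) (ha4 : a ≤ 1 / 4)
    (hb : 3 / 4 ≤ b) (hb1 : b ≤ 1) :
    intervalExcess a b ≤ excessPotential b - excessPotential a := by
  rw [excessPotential_of_le ha4, excessPotential_of_ge hb]
  have main := intervalExcess_le_affine (a := a) (l := max 0 (3 / 4 - (b - a)))
    (u := min (1 / 4) (1 - (b - a))) (t := b - a)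
    (p := log 2 - (3 * log 2 - 1) * (1 - (b - a))) (q := 0)
    (le_max_left _ _) (max_le ha (by linarith)) (le_min ha4 (by linarith)) (by linarith)
    (by linarith [min_le_right (1 / 4) (1 - (b - a))]) ?_ ?_
  · rw [show a + (b - a) = b by ring] at main
    linarith
  · rcases le_total (3 / 4) (b - a) with h | h
    · rw [max_eq_left (by linarith), zero_add]
      have := intervalExcess_zero_left_le_potential (b := b - a) (by linarith) (by linarith)
      rw [excessPotential_of_ge h] at this
      linarith
    · rw [max_eq_right (by linarith), sub_add_cancel]
      have := intervalExcess_three_quarters_le_potential (a := 3 / 4 - (b - a)) (by linarith)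
        (by linarith)
      rw [excessPotential_of_ge le_rfl, excessPotential_of_le (by linarith)] at this
      linarith
  · rcases le_total (b - a) (3 / 4) with h | h
    · rw [min_eq_left (by linarith)]
      have := intervalExcess_quarter_le_potential (b := 1 / 4 + (b - a)) (by linarith)
        (by linarith)
      rw [excessPotential_of_ge (by linarith), excessPotential_of_le le_rfl] at this
      linarith
    · rw [min_eq_right (by linarith), sub_add_cancel]
      have := intervalExcess_one_right_le_potential (a := 1 - (b - a)) (by linarith) (by linarith)
      rw [excessPotential_of_le (by linarith)] at this
      linarith

theorem intervalExcess_le_potential {a b : ℝ} (ha : 0 ≤ a) (hab : a < b) (hb : b ≤ 1) :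
    intervalExcess a b ≤ excessPotential b - excessPotential a := by
  have hL := log_two_gt_d9
  have hs := intervalExcess_le_sub ha hab hb
  rcases le_total b (1 / 4) with h | h
  · rw [excessPotential_of_le h, excessPotential_of_le (by linarith)]
    nlinarith
  rcases le_total (3 / 4) a with h' | h'
  · rw [excessPotential_of_ge h', excessPotential_of_ge (by linarith)]
    nlinarith
  rcases le_total a (1 / 4) with h2 | h2 <;> rcases le_total b (3 / 4) with h3 | h3
  · exact intervalExcess_le_of_le_quarter_of_mem ha hab h2 h h3
  · exact intervalExcess_le_of_le_quarter_of_ge ha h2 h3 hb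
  · exact intervalExcess_le_of_mem h2 hab h3
  · have := intervalExcess_le_of_le_quarter_of_mem (a := 1 - b) (b := 1 - a) (by linarith)
      (by linarith) (by linarith) (by linarith) (by linarith)
    rw [intervalExcess_one_sub, excessPotential_one_sub, excessPotential_one_sub] at this
    linarith

end IntervalInequality

section OrderedPartition

open Real

/-- A potential whose increments dominate the entropy terms of the pieces of a partition of
`[0, 1]`. -/
def partitionPotential (x : ℝ) : ℝ :=
  x * log x - (1 - x) * log (1 - x) + excessPotential x

theorem partitionPotential_zero : partitionPotential 0 = 0 := by
  rw [partitionPotential, excessPotential_of_le (by norm_num)]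
  simp

theorem partitionPotential_one : partitionPotential 1 = log 2 := by
  rw [partitionPotential, excessPotential_of_ge (by norm_num)]
  simp

theorem mul_log_add_log_le_partitionPotential_sub {a b : ℝ} (ha : 0 ≤ a) (hab : a ≤ b)
    (hb : b ≤ 1) :
    (b - a) * (log b + log (1 - a)) - 2 * ((1 - (b - a)) * log (1 - (b - a))) ≤
      partitionPotential b - partitionPotential a := by
  rcases hab.eq_or_lt with rfl | hab
  · simp
  · have h := intervalExcess_le_potential ha hab hb
    rw [intervalExcess, show 1 - b + a = 1 - (b - a) by ring] at h
    simp only [partitionPotential]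
    linarith

theorem sum_mul_log_add_log_le {n : ℕ} {p : Fin n → ℝ} (hp0 : ∀ j, 0 ≤ p j) (hp : ∑ j, p j = 1)
    (ρ : Equiv.Perm (Fin n)) :
    ∑ k, p k * (log (∑ j with ρ j ≤ ρ k, p j) + log (∑ j with ρ k ≤ ρ j, p j)) ≤
      log 2 + 2 * ∑ k, (1 - p k) * log (1 - p k) := by
  set X : ℕ → ℝ := fun m => ∑ j with (ρ j : ℕ) < m, p j with hX
  have hX0 : X 0 = 0 := by simp [hX]
  have hXn : X n = 1 := by simpa [hX] using hp
  have hXnonneg : ∀ m, 0 ≤ X m := fun m => Finset.sum_nonneg fun j _ => hp0 j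
  have hXle : ∀ m, X m ≤ 1 := fun m =>
    (Finset.sum_le_sum_of_subset_of_nonneg (Finset.filter_subset _ _) fun j _ _ => hp0 j).trans
      hp.le
  have hle : ∀ k, ∑ j with ρ j ≤ ρ k, p j = X (ρ k + 1) := fun k => by
    refine Finset.sum_congr (Finset.filter_congr fun j _ => ?_) fun _ _ => rfl
    rw [Nat.lt_succ_iff, Fin.le_def]
  have hge : ∀ k, ∑ j with ρ k ≤ ρ j, p j = 1 - X (ρ k) := fun k => by
    rw [eq_sub_iff_add_eq, ← hp, ← Finset.sum_filter_add_sum_filter_not Finset.univ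
      (fun j => ρ k ≤ ρ j)]
    congr 1
    refine Finset.sum_congr (Finset.filter_congr fun j _ => ?_) fun _ _ => rfl
    rw [not_le, Fin.lt_def]
  have hstep : ∀ k, X (ρ k + 1) - X (ρ k) = p k := fun k => by
    rw [sub_eq_iff_eq_add', ← hle]
    have : (Finset.univ.filter fun j => ρ j ≤ ρ k) =
        insert k (Finset.univ.filter fun j => (ρ j : ℕ) < ρ k) := by
      ext j
      simp [le_iff_lt_or_eq, or_comm]
    rw [this, Finset.sum_insert (by simp), add_comm]
  have key : ∀ k, p k * (log (∑ j with ρ j ≤ ρ k, p j) + log (∑ j with ρ k ≤ ρ j, p j)) -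
      2 * ((1 - p k) * log (1 - p k)) ≤
        partitionPotential (X (ρ k + 1)) - partitionPotential (X (ρ k)) := fun k => by
    have h := mul_log_add_log_le_partitionPotential_sub (hXnonneg (ρ k))
      (sub_nonneg.1 ((hstep k).symm ▸ hp0 k)) (hXle (ρ k + 1))
    rw [hle, hge]
    rwa [hstep k] at h
  have tele : ∑ k, (partitionPotential (X (ρ k + 1)) - partitionPotential (X (ρ k))) = log 2 := by
    rw [Equiv.sum_comp ρ fun m : Fin n =>
        partitionPotential (X ((m : ℕ) + 1)) - partitionPotential (X m),
      Fin.sum_univ_eq_sum_range fun m => partitionPotential (X (m + 1)) - partitionPotential (X m),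
      Finset.sum_range_sub fun m => partitionPotential (X m), hXn, hX0, partitionPotential_one,
      partitionPotential_zero, sub_zero]
  have := Finset.sum_le_sum fun k (_ : k ∈ Finset.univ) => key k
  rw [tele, Finset.sum_sub_distrib, ← Finset.mul_sum] at this
  linarith

end OrderedPartition

section BetheConcavity

open Real

theorem sum_sq_mul_inv_sub_inv_nonneg {ι : Type*} [Fintype ι] [DecidableEq ι] {x v : ι → ℝ}
    (hx0 : ∀ j, 0 ≤ x j) (hx1 : ∀ j, x j < 1) (hx : ∑ j, x j = 1) (hv : ∑ j, v j = 0)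
    (hxv : ∀ j, x j = 0 → v j = 0) : 0 ≤ ∑ j, v j ^ 2 * ((x j)⁻¹ - (1 - x j)⁻¹) := by
  by_cases hhalf : ∀ j, x j ≤ 1 / 2
  · refine Finset.sum_nonneg fun j _ => ?_
    rcases (hx0 j).eq_or_lt with h | h
    · simp [hxv j h.symm]
    · exact mul_nonneg (sq_nonneg _)
        (sub_nonneg.2 (inv_anti₀ h (by linarith [hhalf j])))
  push Not at hhalf
  obtain ⟨m, hm⟩ := hhalf
  have hm1 := hx1 m
  have hm0 : 0 < x m := by linarith
  have hxS : ∑ j ∈ Finset.univ.erase m, x j = 1 - x m := by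
    rw [← hx, ← Finset.add_sum_erase _ _ (Finset.mem_univ m)]; ring
  have hvS : ∑ j ∈ Finset.univ.erase m, v j = -v m := by
    rw [← Finset.add_sum_erase _ _ (Finset.mem_univ m)] at hv; linarith
  have hCS := Finset.sum_sq_le_sum_mul_sum_of_sq_le_mul (Finset.univ.erase m) (r := v) (f := x)
    (g := fun j => v j ^ 2 * (x j)⁻¹) (fun j _ => hx0 j)
    (fun j _ => mul_nonneg (sq_nonneg _) (inv_nonneg.2 (hx0 j))) fun j _ => by
      by_cases h : x j = 0
      · simp [hxv j h]
      · refine le_of_eq ?_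
        field_simp
  rw [hxS, hvS] at hCS
  have hterm : ∀ j ∈ Finset.univ.erase m, (2 * x m - 1) / x m * (v j ^ 2 * (x j)⁻¹) ≤
      v j ^ 2 * ((x j)⁻¹ - (1 - x j)⁻¹) := fun j hj => by
    rcases (hx0 j).eq_or_lt with h | h
    · simp [hxv j h.symm]
    have hj1 : x j ≤ 1 - x m := hxS ▸ Finset.single_le_sum (fun j _ => hx0 j) hj
    have hpos : 0 < 1 - x j := by linarith
    have : (x j)⁻¹ - (1 - x j)⁻¹ - (2 * x m - 1) / x m * (x j)⁻¹ =
        (1 - x m - x j) / (x m * x j * (1 - x j)) := by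
      field_simp
      ring
    have h2 : 0 ≤ v j ^ 2 * ((1 - x m - x j) / (x m * x j * (1 - x j))) :=
      mul_nonneg (sq_nonneg _) (div_nonneg (by linarith) (by positivity))
    rw [← this] at h2
    linarith
  have hsum := Finset.sum_le_sum hterm
  rw [← Finset.mul_sum] at hsum
  rw [← Finset.add_sum_erase _ _ (Finset.mem_univ m)]
  have hpos : 0 < 1 - x m := by linarith
  have h1 : v m ^ 2 / (1 - x m) ≤ ∑ j ∈ Finset.univ.erase m, v j ^ 2 * (x j)⁻¹ := by
    rw [div_le_iff₀ hpos]
    linarith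
  have h2 := mul_le_mul_of_nonneg_left h1
    (div_nonneg (by linarith) hm0.le : 0 ≤ (2 * x m - 1) / x m)
  have h3 : (2 * x m - 1) / x m * (v m ^ 2 / (1 - x m)) =
      -(v m ^ 2 * ((x m)⁻¹ - (1 - x m)⁻¹)) := by
    field_simp
    ring
  linarith

/-- The Bethe entropy inequality: `∑ (1 - p) log (1 - p) - p log p` is a lower bound for the
corresponding cross term. -/
theorem sum_one_sub_mul_log_sub_mul_log_le {ι : Type*} [Fintype ι] [DecidableEq ι] {p b : ι → ℝ}
    (hp0 : ∀ j, 0 ≤ p j) (hp : ∑ j, p j = 1) (hb0 : ∀ j, 0 ≤ b j) (hb1 : ∀ j, b j < 1)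
    (hb : ∑ j, b j = 1) (hpb : ∀ j, 0 < p j → 0 < b j) :
    ∑ j, ((1 - p j) * log (1 - p j) - p j * log (p j)) ≤
      ∑ j, ((1 - p j) * log (1 - b j) - p j * log (b j)) := by
  have hp1 : ∀ j, p j ≤ 1 := fun j =>
    hp ▸ Finset.single_le_sum (fun j _ => hp0 j) (Finset.mem_univ j)
  let x : ι → ℝ → ℝ := fun j t => p j + t * (b j - p j)
  have hxc : ∀ j, Continuous (x j) := fun j => by fun_prop
  have hxd : ∀ j t, HasDerivAt (x j) (b j - p j) t := fun j t => by
    have h := ((hasDerivAt_id t).mul_const (b j - p j)).const_add (p j)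
    rwa [one_mul] at h
  have hx0 : ∀ j, ∀ t ∈ Set.Icc (0 : ℝ) 1, 0 ≤ x j t := fun j t ht => by
    nlinarith [mul_nonneg (sub_nonneg.2 ht.2) (hp0 j), mul_nonneg ht.1 (hb0 j)]
  have hxpos : ∀ j, 0 < p j → ∀ t ∈ Set.Icc (0 : ℝ) 1, 0 < x j t := fun j hj t ht => by
    rcases ht.1.eq_or_lt with rfl | h
    · simpa [x] using hj
    · nlinarith [mul_nonneg (sub_nonneg.2 ht.2) (hp0 j), mul_pos h (hpb j hj)]
  have hxlt : ∀ j, ∀ t ∈ Set.Ioc (0 : ℝ) 1, x j t < 1 := fun j t ht => by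
    nlinarith [mul_nonneg (sub_nonneg.2 ht.2) (sub_nonneg.2 (hp1 j)),
      mul_pos ht.1 (sub_pos.2 (hb1 j))]
  have hxlt' : ∀ j, p j < 1 → ∀ t ∈ Set.Icc (0 : ℝ) 1, x j t < 1 := fun j hj t ht => by
    rcases ht.1.eq_or_lt with rfl | h
    · simpa [x] using hj
    · exact hxlt j t ⟨h, ht.2⟩
  have hmono : MonotoneOn
      (fun t => ∑ j, ((1 - p j) * log (1 - x j t) - p j * log (x j t))) (Set.Icc 0 1) := by
    refine monotoneOn_of_hasDerivWithinAt_nonneg (convex_Icc 0 1)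
      (f' := fun t => ∑ j, ((1 - p j) * (-(b j - p j) / (1 - x j t)) -
        p j * ((b j - p j) / x j t))) ?_ ?_ ?_
    · refine continuousOn_finsetSum _ fun j _ => ContinuousOn.sub ?_ ?_
      · rcases (hp1 j).eq_or_lt with h | h
        · simpa [h] using continuousOn_const
        · exact continuousOn_const.mul ((continuous_const.sub (hxc j)).continuousOn.log
            fun t ht => (sub_pos.2 (hxlt' j h t ht)).ne')
      · rcases (hp0 j).eq_or_lt with h | h
        · simpa [← h] using continuousOn_const
        · exact continuousOn_const.mul ((hxc j).continuousOn.log fun t ht => (hxpos j h t ht).ne')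
    · intro t ht
      rw [interior_Icc] at ht ⊢
      refine (HasDerivAt.fun_sum fun j _ => HasDerivAt.sub ?_ ?_).hasDerivWithinAt
      · exact (((hxd j t).const_sub 1).log
          (by linarith [hxlt j t ⟨ht.1, ht.2.le⟩])).const_mul _
      · rcases (hp0 j).eq_or_lt with h | h
        · simpa [← h] using hasDerivAt_const t (0 : ℝ)
        · exact ((hxd j t).log (hxpos j h t ⟨ht.1.le, ht.2.le⟩).ne').const_mul _
    · intro t ht
      rw [interior_Icc] at ht
      have hzero : ∀ j, x j t = 0 → b j - p j = 0 := fun j hj => by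
        have h1 := mul_nonneg (sub_nonneg.2 ht.2.le) (hp0 j)
        have h2 := mul_nonneg ht.1.le (hb0 j)
        have h3 : (1 - t) * p j + t * b j = 0 := by rw [← hj]; simp only [x]; ring
        have h4 : t * b j = 0 := by linarith
        have h5 : (1 - t) * p j = 0 := by linarith
        rw [mul_eq_zero, or_iff_right (by linarith [ht.1])] at h4
        rw [mul_eq_zero, or_iff_right (by linarith [ht.2])] at h5
        rw [h4, h5, sub_zero]
      have hv : ∑ j, (b j - p j) = 0 := by rw [Finset.sum_sub_distrib, hb, hp, sub_self]
      have hQ := sum_sq_mul_inv_sub_inv_nonneg (x := fun j => x j t) (v := fun j => b j - p j)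
        (fun j => hx0 j t ⟨ht.1.le, ht.2.le⟩) (fun j => hxlt j t ⟨ht.1, ht.2.le⟩)
        (by simp only [x]; rw [Finset.sum_add_distrib, ← Finset.mul_sum, hv, hp]; ring) hv hzero
      have e : ∀ j, (1 - p j) * (-(b j - p j) / (1 - x j t)) - p j * ((b j - p j) / x j t) =
          t * ((b j - p j) ^ 2 * ((x j t)⁻¹ - (1 - x j t)⁻¹)) - 2 * (b j - p j) := fun j => by
        have h1 : 1 - x j t ≠ 0 := by linarith [hxlt j t ⟨ht.1, ht.2.le⟩]
        by_cases h : x j t = 0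
        · rw [hzero j h]; simp
        · have e1 : (1 - p j) = (1 - x j t) + t * (b j - p j) := by simp only [x]; ring
          have e2 : p j * ((b j - p j) / x j t) =
              (x j t - t * (b j - p j)) * ((b j - p j) / x j t) := by simp only [x]; ring
          rw [e1, e2]
          generalize x j t = y at *
          field_simp
          ring
      simp only [e]
      rw [Finset.sum_sub_distrib, ← Finset.mul_sum, ← Finset.mul_sum, hv, mul_zero, sub_zero]
      exact mul_nonneg ht.1.le hQ
  have := hmono (Set.left_mem_Icc.2 zero_le_one) (Set.right_mem_Icc.2 zero_le_one) zero_le_one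
  simpa [x] using this

end BetheConcavity

section EntropyBound

open Real

/-- Exposing the values of a permutation one row at a time, in the order prescribed by `e`, defines
a subprobability measure on permutations. -/
theorem sum_permsAgreeingOff_prod_div_le_one {ι : Type*} [Fintype ι] [DecidableEq ι]
    {α : Type*} [LinearOrder α] {P : ι → ι → ℝ} (hP : ∀ i j, 0 ≤ P i j) (e : ι ↪ α)
    (R : Finset ι) (τ : Equiv.Perm ι) :
    ∑ σ ∈ permsAgreeingOff R τ, ∏ i ∈ R, P i (σ i) / ∑ j ∈ R with e i ≤ e j, P i (σ j) ≤ 1 := by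
  induction R using Finset.induction_on_min_value e generalizing τ with
  | empty => simp [permsAgreeingOff_empty]
  | insert a R ha hmin ih =>
    have hlt : ∀ x ∈ R, e a < e x := fun x hx =>
      (hmin x hx).lt_of_ne fun h => ha (e.injective h ▸ hx)
    rw [sum_permsAgreeingOff_insert _ ha]
    set C := ∑ j ∈ (insert a R).image τ, P a j with hC
    have hfilter : ∀ i ∈ R, ((insert a R).filter fun j => e i ≤ e j) =
        R.filter fun j => e i ≤ e j := fun i hi => by
      rw [Finset.filter_insert, if_neg (hlt i hi).not_ge]
    have hfilter' : ((insert a R).filter fun j => e a ≤ e j) = insert a R := by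
      rw [Finset.filter_true_of_mem]
      intro x hx
      rcases Finset.mem_insert.1 hx with rfl | hx
      · exact le_rfl
      · exact (hlt x hx).le
    have hinner : ∀ j ∈ (insert a R).image τ,
        ∑ σ ∈ permsAgreeingOff R (Equiv.swap (τ a) j * τ),
          ∏ i ∈ insert a R, P i (σ i) / ∑ k ∈ insert a R with e i ≤ e k, P i (σ k) ≤
            P a j / C := fun j hj => by
      have hterm : ∀ σ ∈ permsAgreeingOff R (Equiv.swap (τ a) j * τ),
          ∏ i ∈ insert a R, P i (σ i) / ∑ k ∈ insert a R with e i ≤ e k, P i (σ k) =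
            P a j / C * ∏ i ∈ R, P i (σ i) / ∑ k ∈ R with e i ≤ e k, P i (σ k) := fun σ hσ => by
        have hσa : σ a = j := by
          have := (Finset.mem_filter.1 hσ).2 a ha
          simpa using this
        have hσ' : σ ∈ permsAgreeingOff (insert a R) τ := by
          have h1 := swap_mul_mem_permsAgreeingOff (Finset.mem_insert_self a R) τ hj
          refine Finset.mem_filter.2 ⟨Finset.mem_univ _, fun x hx => ?_⟩
          rw [(Finset.mem_filter.1 hσ).2 x fun h => hx (Finset.mem_insert_of_mem h)]
          exact (Finset.mem_filter.1 h1).2 x hx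
        rw [Finset.prod_insert ha, hfilter', hσa, hC,
          ← image_eq_of_mem_permsAgreeingOff hσ', Finset.sum_image σ.injective.injOn]
        congr 1
        exact Finset.prod_congr rfl fun i hi => by rw [hfilter i hi]
      rw [Finset.sum_congr rfl hterm, ← Finset.mul_sum]
      exact mul_le_of_le_one_right
        (div_nonneg (hP _ _) (Finset.sum_nonneg fun _ _ => hP _ _)) (ih _)
    refine (Finset.sum_le_sum hinner).trans ?_
    rw [← Finset.sum_div]
    exact div_self_le_one C

theorem sum_perm_prod_div_le_one {ι : Type*} [Fintype ι] [DecidableEq ι]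
    {α : Type*} [LinearOrder α] {P : ι → ι → ℝ} (hP : ∀ i j, 0 ≤ P i j) (e : ι ↪ α) :
    ∑ σ : Equiv.Perm ι, ∏ i, P i (σ i) / ∑ j with e i ≤ e j, P i (σ j) ≤ 1 := by
  have := sum_permsAgreeingOff_prod_div_le_one hP e Finset.univ 1
  rwa [permsAgreeingOff_univ] at this

/-- Gibbs' variational inequality for a finite partition function. -/
theorem log_sum_le_sum_mul_log_sub_log {α : Type*} [Fintype α] {w ν : α → ℝ} (hw : ∀ x, 0 ≤ w x)
    (hZ : 0 < ∑ x, w x) (hν : ∀ x, 0 ≤ ν x) (hν1 : ∑ x, ν x ≤ 1) (hwν : ∀ x, 0 < w x → 0 < ν x) :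
    log (∑ x, w x) ≤ ∑ x, w x / (∑ y, w y) * (log (w x) - log (ν x)) := by
  set Z := ∑ x, w x with hZdef
  have hterm : ∀ x, w x / Z * log Z - w x / Z * (log (w x) - log (ν x)) ≤ ν x - w x / Z := by
    intro x
    rcases (hw x).eq_or_lt with h | h
    · simpa [← h] using hν x
    · have hx := hwν x h
      have hl := log_le_sub_one_of_pos (show 0 < Z * ν x / w x by positivity)
      rw [log_div (by positivity) h.ne', log_mul hZ.ne' hx.ne'] at hl
      have := mul_le_mul_of_nonneg_left hl (div_nonneg h.le hZ.le)
      have e : w x / Z * (Z * ν x / w x - 1) = ν x - w x / Z := by field_simp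
      linarith
  have hsum := Finset.sum_le_sum fun x (_ : x ∈ Finset.univ) => hterm x
  rw [Finset.sum_sub_distrib, Finset.sum_sub_distrib, ← Finset.sum_mul, ← Finset.sum_div, ← hZdef,
    div_self hZ.ne', one_mul] at hsum
  linarith

/-- Averaging the ordered entropy bound over all orders of the columns. -/
theorem sum_mul_sum_perm_log_le {n : ℕ} {p : Fin n → ℝ} (hp0 : ∀ j, 0 ≤ p j)
    (hp : ∑ j, p j = 1) :
    ∑ k, p k * ∑ ρ : Equiv.Perm (Fin n), log (∑ j with ρ k ≤ ρ j, p j) ≤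
      Fintype.card (Equiv.Perm (Fin n)) *
        (log 2 / 2 + ∑ k, (1 - p k) * log (1 - p k)) := by
  have hrev : ∀ k, ∑ ρ : Equiv.Perm (Fin n), log (∑ j with ρ k ≤ ρ j, p j) =
      ∑ ρ : Equiv.Perm (Fin n), log (∑ j with ρ j ≤ ρ k, p j) := fun k => by
    rw [← Equiv.sum_comp (Equiv.mulLeft (Fin.revPerm : Equiv.Perm (Fin n)))]
    simp
  have hsum := Finset.sum_le_sum fun ρ (_ : ρ ∈ Finset.univ) => sum_mul_log_add_log_le hp0 hp ρ
  rw [Finset.sum_const, Finset.card_univ, nsmul_eq_mul, Finset.sum_comm] at hsum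
  have e : ∀ k, ∑ ρ : Equiv.Perm (Fin n),
      p k * (log (∑ j with ρ j ≤ ρ k, p j) + log (∑ j with ρ k ≤ ρ j, p j)) =
        2 * (p k * ∑ ρ : Equiv.Perm (Fin n), log (∑ j with ρ k ≤ ρ j, p j)) := fun k => by
    rw [← Finset.mul_sum, Finset.sum_add_distrib, ← hrev k]
    ring
  simp only [e] at hsum
  rw [← Finset.mul_sum] at hsum
  linarith

/-- An entropy bound for permanents in terms of the edge marginals of the associated random
permutation. -/
theorem exists_log_sum_perm_le {n : ℕ} {a : Fin n → Fin n → ℝ} (ha : ∀ i j, 0 ≤ a i j)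
    (hZ : 0 < ∑ σ : Equiv.Perm (Fin n), ∏ i, a i (σ i)) :
    ∃ P : Fin n → Fin n → ℝ, (∀ i j, 0 ≤ P i j) ∧ (∀ i, ∑ j, P i j = 1) ∧
      (∀ i j, 0 < P i j → 0 < a i j) ∧
      log (∑ σ : Equiv.Perm (Fin n), ∏ i, a i (σ i)) ≤
        ∑ i, (∑ k, P i k * (log (a i k) - log (P i k)) + log 2 / 2 +
          ∑ k, (1 - P i k) * log (1 - P i k)) := by
  set w : Equiv.Perm (Fin n) → ℝ := fun σ => ∏ i, a i (σ i) with hw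
  set Z := ∑ σ, w σ with hZdef
  have hw0 : ∀ σ, 0 ≤ w σ := fun σ => Finset.prod_nonneg fun i _ => ha i _
  have hwa : ∀ σ, w σ ≠ 0 → ∀ i, 0 < a i (σ i) := fun σ h i =>
    (ha i _).lt_of_ne' (Finset.prod_ne_zero_iff.1 h i (Finset.mem_univ i))
  let P : Fin n → Fin n → ℝ := fun i j => ∑ σ with σ i = j, w σ / Z
  have hμ0 : ∀ σ, 0 ≤ w σ / Z := fun σ => div_nonneg (hw0 σ) hZ.le
  have hP0 : ∀ i j, 0 ≤ P i j := fun i j => Finset.sum_nonneg fun σ _ => hμ0 σ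
  have hmarg : ∀ i (f : Fin n → ℝ), ∑ σ, w σ / Z * f (σ i) = ∑ k, P i k * f k := fun i f => by
    rw [← Finset.sum_fiberwise Finset.univ fun σ : Equiv.Perm (Fin n) => σ i]
    refine Finset.sum_congr rfl fun k _ => ?_
    rw [Finset.sum_mul]
    exact Finset.sum_congr rfl fun σ hσ => by rw [(Finset.mem_filter.1 hσ).2]
  have hP1 : ∀ i, ∑ j, P i j = 1 := fun i => by
    have := hmarg i fun _ => 1
    simp only [mul_one] at this
    rw [← this, ← Finset.sum_div, div_self hZ.ne']
  have hPpos : ∀ σ, 0 < w σ → ∀ i, 0 < P i (σ i) := fun σ h i =>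
    (div_pos h hZ).trans_le (Finset.single_le_sum (f := fun σ => w σ / Z) (fun σ _ => hμ0 σ)
      (Finset.mem_filter.2 ⟨Finset.mem_univ σ, rfl⟩))
  have hPa : ∀ i j, 0 < P i j → 0 < a i j := fun i j h => by
    obtain ⟨σ, hσ, hne⟩ := Finset.exists_ne_zero_of_sum_ne_zero h.ne'
    have := hwa σ (fun h0 => hne (by rw [h0, zero_div])) i
    rwa [(Finset.mem_filter.1 hσ).2] at this
  refine ⟨P, hP0, hP1, hPa, ?_⟩
  clear_value P
  have hSpos : ∀ (ρ σ : Equiv.Perm (Fin n)), 0 < w σ → ∀ i,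
      0 < ∑ j with ρ i ≤ ρ j, P i (σ j) := fun ρ σ h i =>
    (hPpos σ h i).trans_le (Finset.single_le_sum (f := fun j => P i (σ j)) (fun j _ => hP0 i _)
      (Finset.mem_filter.2 ⟨Finset.mem_univ i, le_rfl⟩))
  have hgibbs : ∀ ρ : Equiv.Perm (Fin n), log Z ≤ ∑ σ, w σ / Z *
      ∑ i, (log (a i (σ i)) - log (P i (σ i)) + log (∑ j with ρ i ≤ ρ j, P i (σ j))) := fun ρ => by
    refine (log_sum_le_sum_mul_log_sub_log hw0 hZ
      (ν := fun σ => ∏ i, P i (σ i) / ∑ j with ρ i ≤ ρ j, P i (σ j))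
      (fun σ => Finset.prod_nonneg fun i _ =>
        div_nonneg (hP0 _ _) (Finset.sum_nonneg fun _ _ => hP0 _ _))
      (sum_perm_prod_div_le_one hP0 ρ.toEmbedding)
      (fun σ h => Finset.prod_pos fun i _ => div_pos (hPpos σ h i) (hSpos ρ σ h i))).trans
      (le_of_eq (Finset.sum_congr rfl fun σ _ => ?_))
    rcases (hw0 σ).eq_or_lt with h | h
    · simp [← h]
    · have h1 : log (w σ) = ∑ i, log (a i (σ i)) := log_prod fun i _ => (hwa σ h.ne' i).ne'
      have h2 := log_prod (s := Finset.univ) fun i _ =>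
        (div_pos (hPpos σ h i) (hSpos ρ σ h i)).ne'
      rw [h1, h2, ← Finset.sum_sub_distrib]
      refine congrArg (w σ / Z * ·) ?_
      refine Finset.sum_congr rfl fun i _ => ?_
      rw [log_div (hPpos σ h i).ne' (hSpos ρ σ h i).ne']
      ring
  set N := (Fintype.card (Equiv.Perm (Fin n)) : ℝ) with hN
  have hN0 : 0 < N := Nat.cast_pos.2 Fintype.card_pos
  have hsum := Finset.sum_le_sum fun ρ (_ : ρ ∈ Finset.univ) => hgibbs ρ
  rw [Finset.sum_const, Finset.card_univ, nsmul_eq_mul, ← hN, Finset.sum_comm] at hsum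
  have hrelabel : ∀ (σ : Equiv.Perm (Fin n)) i,
      ∑ ρ : Equiv.Perm (Fin n), log (∑ j with ρ i ≤ ρ j, P i (σ j)) =
        ∑ ρ : Equiv.Perm (Fin n), log (∑ j with ρ (σ i) ≤ ρ j, P i j) := fun σ i => by
    rw [← Equiv.sum_comp (Equiv.mulRight σ)]
    refine Finset.sum_congr rfl fun ρ _ => ?_
    congr 1
    rw [Finset.sum_filter, Finset.sum_filter,
      ← Equiv.sum_comp σ fun j => if ρ (σ i) ≤ ρ j then P i j else 0]
    rfl
  have hrow : ∀ σ : Equiv.Perm (Fin n), ∑ ρ : Equiv.Perm (Fin n), w σ / Z *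
      ∑ i, (log (a i (σ i)) - log (P i (σ i)) + log (∑ j with ρ i ≤ ρ j, P i (σ j))) =
      ∑ i, w σ / Z * (N * (log (a i (σ i)) - log (P i (σ i))) +
        ∑ ρ : Equiv.Perm (Fin n), log (∑ j with ρ (σ i) ≤ ρ j, P i j)) := fun σ => by
    rw [← Finset.mul_sum, Finset.sum_comm, Finset.mul_sum]
    refine Finset.sum_congr rfl fun i _ => ?_
    rw [Finset.sum_add_distrib, Finset.sum_const, Finset.card_univ, nsmul_eq_mul, hrelabel]
  simp only [hrow] at hsum
  rw [Finset.sum_comm] at hsum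
  refine le_of_mul_le_mul_left (hsum.trans ?_) hN0
  rw [Finset.mul_sum]
  refine Finset.sum_le_sum fun i _ => ?_
  rw [hmarg i fun k => N * (log (a i k) - log (P i k)) +
    ∑ ρ : Equiv.Perm (Fin n), log (∑ j with ρ k ≤ ρ j, P i j)]
  have h := sum_mul_sum_perm_log_le (hP0 i) (hP1 i)
  simp only [mul_add, Finset.sum_add_distrib, mul_left_comm _ N, ← Finset.mul_sum] at h ⊢
  linarith

theorem sum_perm_le_two_rpow_mul_prod_one_sub {n : ℕ} {B : Fin n → Fin n → ℝ}
    (hB0 : ∀ i j, 0 ≤ B i j) (hrow : ∀ i, ∑ j, B i j = 1) (hlt : ∀ i j, B i j < 1)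
    (hZ : 0 < ∑ σ : Equiv.Perm (Fin n), ∏ i, B i (σ i) * (1 - B i (σ i))) :
    ∑ σ : Equiv.Perm (Fin n), ∏ i, B i (σ i) * (1 - B i (σ i)) ≤
      (2 : ℝ) ^ ((n : ℝ) / 2) * ∏ i, ∏ j, (1 - B i j) := by
  have hpos : ∀ i j, 0 < 1 - B i j := fun i j => sub_pos.2 (hlt i j)
  obtain ⟨P, hP0, hP1, hPa, hlog⟩ := exists_log_sum_perm_le
    (a := fun i j => B i j * (1 - B i j)) (fun i j => mul_nonneg (hB0 i j) (hpos i j).le) hZ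
  have hPB : ∀ i j, 0 < P i j → 0 < B i j := fun i j h =>
    pos_of_mul_pos_left (hPa i j h) (hpos i j).le
  have hbound : ∀ i, ∑ k, P i k * (log (B i k * (1 - B i k)) - log (P i k)) + log 2 / 2 +
      ∑ k, (1 - P i k) * log (1 - P i k) ≤ log 2 / 2 + ∑ k, log (1 - B i k) := fun i => by
    have h := sum_one_sub_mul_log_sub_mul_log_le (hP0 i) (hP1 i) (hB0 i) (hlt i) (hrow i) (hPB i)
    have e : ∀ k, P i k * (log (B i k * (1 - B i k)) - log (P i k)) =
        P i k * log (B i k) + P i k * log (1 - B i k) - P i k * log (P i k) := fun k => by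
      rcases (hP0 i k).eq_or_lt with h0 | h0
      · simp [← h0]
      · rw [log_mul (hPB i k h0).ne' (hpos i k).ne']
        ring
    simp only [e, sub_mul, one_mul, Finset.sum_sub_distrib, Finset.sum_add_distrib] at h ⊢
    linarith
  have hmain := hlog.trans (Finset.sum_le_sum fun i _ => hbound i)
  have hprod : 0 < ∏ i, ∏ j, (1 - B i j) :=
    Finset.prod_pos fun i _ => Finset.prod_pos fun j _ => hpos i j
  rw [← log_le_log_iff hZ (by positivity), log_mul (by positivity) hprod.ne', log_rpow two_pos,
    log_prod fun i _ => (Finset.prod_pos fun j _ => hpos i j).ne']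
  refine hmain.trans (le_of_eq ?_)
  rw [Finset.sum_add_distrib, Finset.sum_const, Finset.card_univ, Fintype.card_fin, nsmul_eq_mul]
  congr 1
  · ring
  · exact Finset.sum_congr rfl fun i _ => (log_prod fun j _ => (hpos i j).ne').symm

end EntropyBound

/-- For `r ≥ 1` and an `r×r` doubly stochastic real matrix `B` all of whose
entries are `< 1`:
`∏_{i,j} (1 − B(i,j)) ≤ Σ_{σ∈S_r} ∏_i B(i,σ(i))·(1 − B(i,σ(i))) ≤ 2^{r/2} · ∏_{i,j} (1 − B(i,j))`. -/
theorem statement_10 (r : ℕ) (hr : 1 ≤ r) (B : Matrix (Fin r) (Fin r) ℝ)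
    (hB0 : ∀ i j, 0 ≤ B i j) (hrow : ∀ i, ∑ j, B i j = 1) (hcol : ∀ j, ∑ i, B i j = 1)
    (hlt : ∀ i j, B i j < 1) :
    (∏ i, ∏ j, (1 - B i j)) ≤
        (∑ σ : Equiv.Perm (Fin r), ∏ i, B i (σ i) * (1 - B i (σ i))) ∧
      (∑ σ : Equiv.Perm (Fin r), ∏ i, B i (σ i) * (1 - B i (σ i))) ≤
        (2 : ℝ) ^ ((r : ℝ) / 2) * ∏ i, ∏ j, (1 - B i j) := by
  have hlow := prod_one_sub_le_sum_perm (B := B) hB0 hrow hcol hlt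
  have hpos : 0 < ∏ i, ∏ j, (1 - B i j) :=
    Finset.prod_pos fun i _ => Finset.prod_pos fun j _ => sub_pos.2 (hlt i j)
  exact ⟨hlow, sum_perm_le_two_rpow_mul_prod_one_sub (B := B) hB0 hrow hlt (hpos.trans_le hlow)⟩
end
end

section
/- Fix integers n, N ≥ 1 and k ∈ K(N,n), and let γ be the doubly stochastic matrix with entries γ(i,j) = k(i,j)/N. Then lim_{t→∞} log(C_{tN,n}(t·k)) / (tN) = H'_G(γ), where t ranges over positive integers, t·k is the entrywise multiple (so t·k ∈ K(tN,n)), and H'_G(γ) is the supremum of the Shannon entropies −Σ_{σ∈S_n} p(σ)·log p(σ) over all probability distributions p on S_n satisfying Σ_{σ∈S_n} p(σ)·P_σ = γ (such p exist by the Birkhoff–von Neumann theorem; convention 0·log 0 = 0; log denotes the natural logarithm). -/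
open scoped BigOperators

noncomputable section

/-- The permutation matrix `P_σ` with entries `P_σ(i,j) = 1` iff `σ(i) = j`. -/
def permMat {n : ℕ} (σ : Equiv.Perm (Fin n)) : Matrix (Fin n) (Fin n) ℕ :=
  Matrix.of fun i j => if σ i = j then 1 else 0

/-- `k ∈ K(M,n)`: a nonnegative-integer `n×n` matrix all of whose row sums and
column sums equal `M`. -/
def isDS (M n : ℕ) (k : Matrix (Fin n) (Fin n) ℕ) : Prop :=
  (∀ i, ∑ j, k i j = M) ∧ (∀ j, ∑ i, k i j = M)

/-- `C_{M,n}(k)`: the number of `M`-tuples `(σ_1,…,σ_M)` of permutations of `{1,…,n}`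
with `Σ_m P_{σ_m} = k`. -/
def Ccoef (M n : ℕ) (k : Matrix (Fin n) (Fin n) ℕ) : ℕ :=
  Nat.card {σs : Fin M → Equiv.Perm (Fin n) // (∑ m, permMat (σs m)) = k}

open Finset Filter Topology

/-- The number of words of length `M` in which each letter `i` occurs exactly `c i` times is the
multinomial coefficient of `c`. -/
theorem card_words_mul_prod_factorial {ι : Type*} [Fintype ι] [DecidableEq ι] {M : ℕ} (c : ι → ℕ)
    (hc : ∑ i, c i = M) :
    #{f : Fin M → ι | ∀ i, #{m | f m = i} = c i} * ∏ i, (c i).factorial = M.factorial := by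
  classical
  obtain ⟨f₀, hf₀⟩ : ∃ f : Fin M → ι, ∀ i, #{m | f m = i} = c i := by
    have e : Fin M ≃ Σ i, Fin (c i) := Fintype.equivOfCardEq (by simp [hc])
    refine ⟨fun m => (e m).1, fun i => ?_⟩
    rw [← Fintype.card_subtype, ← Fintype.card_fin (c i)]
    exact Fintype.card_congr
      ((e.subtypeEquiv (q := fun x => x.1 = i) fun _ => Iff.rfl).trans
        (Equiv.sigmaSubtype i))
  have hmaps : ∀ g ∈ (univ : Finset (Equiv.Perm (Fin M))),
      f₀ ∘ g ∈ ({f : Fin M → ι | ∀ i, #{m | f m = i} = c i} : Finset _) := by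
    intro g _
    simp only [mem_filter, mem_univ, true_and, Function.comp_apply]
    intro i
    rw [← hf₀ i]
    exact card_equiv g (by simp)
  have hfib : ∀ f ∈ ({f : Fin M → ι | ∀ i, #{m | f m = i} = c i} : Finset _),
      #{g : Equiv.Perm (Fin M) | f₀ ∘ g = f} = ∏ i, (c i).factorial := by
    intro f hf
    simp only [mem_filter, mem_univ, true_and] at hf
    obtain ⟨g, hg⟩ : ∃ g : Equiv.Perm (Fin M), f₀ ∘ g = f := by
      have e : ∀ i, {m // f m = i} ≃ {m // f₀ m = i} := fun i =>
        Fintype.equivOfCardEq (by rw [Fintype.card_subtype, Fintype.card_subtype, hf, hf₀])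
      exact ⟨Equiv.ofFiberEquiv e, funext fun m => Equiv.ofFiberEquiv_map e m⟩
    have hstab := DomMulAct.stabilizer_card f
    simp only [Fintype.card_subtype, hf] at hstab
    rw [← hstab]
    refine card_equiv (Equiv.mulLeft g⁻¹) fun h => ?_
    simp only [mem_filter, mem_univ, true_and, Equiv.coe_mulLeft, ← hg, Function.comp_assoc]
    rw [← Equiv.Perm.coe_mul, mul_inv_cancel_left]
  have := card_eq_sum_card_fiberwise hmaps
  rw [sum_congr rfl hfib, sum_const, smul_eq_mul, card_univ, Fintype.card_perm,
    Fintype.card_fin] at this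
  exact this.symm

theorem mul_log_sub_le_log_factorial (m : ℕ) :
    m * Real.log m - m ≤ Real.log m.factorial := by
  rcases m.eq_zero_or_pos with rfl | hm
  · simp
  have h := Real.pow_div_factorial_le_exp (x := m) (by positivity) m
  have h2 := Real.log_le_log (by positivity) h
  rw [Real.log_exp, Real.log_div (by positivity) (by positivity), Real.log_pow] at h2
  linarith

theorem log_factorial_le_mul_log_sub (m : ℕ) :
    Real.log m.factorial ≤ m * Real.log m - m + 1 + Real.log m := by
  induction m with
  | zero => simp
  | succ m ih =>
    rcases m.eq_zero_or_pos with rfl | hm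
    · simp
    have hm' : (0 : ℝ) < m := by exact_mod_cast hm
    have h := Real.one_sub_inv_le_log_of_pos (x := (m + 1) / m) (by positivity)
    rw [Real.log_div (by positivity) (by positivity)] at h
    have h2 : (m + 1 : ℝ) * (1 - ((m + 1 : ℝ) / m)⁻¹) = 1 := by
      field_simp
      ring
    have h3 := mul_le_mul_of_nonneg_left h (by positivity : (0 : ℝ) ≤ m + 1)
    rw [Nat.factorial_succ, Nat.cast_mul, Real.log_mul (by positivity) (by positivity)]
    push_cast
    linarith

theorem mul_sum_negMulLog_div {ι : Type*} [Fintype ι] {M : ℕ} (hM : 0 < M) (c : ι → ℕ)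
    (hc : ∑ i, c i = M) :
    M * ∑ i, Real.negMulLog (c i / M) = M * Real.log M - ∑ i, c i * Real.log (c i) := by
  have hM' : (M : ℝ) ≠ 0 := by positivity
  have h : ∀ i, M * Real.negMulLog (c i / M) = c i * Real.log M - c i * Real.log (c i) := by
    intro i
    rcases (c i).eq_zero_or_pos with h0 | h0
    · simp [h0]
    have h0' : (c i : ℝ) ≠ 0 := by positivity
    rw [Real.negMulLog, Real.log_div h0' hM']
    field_simp
    ring
  rw [mul_sum, sum_congr rfl fun i _ => h i, sum_sub_distrib, ← sum_mul, ← Nat.cast_sum, hc]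

theorem log_card_words {ι : Type*} [Fintype ι] [DecidableEq ι] {M : ℕ} (c : ι → ℕ)
    (hc : ∑ i, c i = M) :
    Real.log #{f : Fin M → ι | ∀ i, #{m | f m = i} = c i} =
      Real.log M.factorial - ∑ i, Real.log (c i).factorial := by
  have h := card_words_mul_prod_factorial c hc
  have hne : #{f : Fin M → ι | ∀ i, #{m | f m = i} = c i} ≠ 0 := by
    intro h0
    rw [h0, zero_mul] at h
    exact M.factorial_ne_zero h.symm
  rw [← h, Nat.cast_mul, Nat.cast_prod, Real.log_mul (by exact_mod_cast hne)
    (prod_ne_zero_iff.2 fun i _ => by positivity), Real.log_prod fun i _ => by positivity]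
  ring

theorem log_card_words_le {ι : Type*} [Fintype ι] [DecidableEq ι] {M : ℕ} (hM : 0 < M)
    (c : ι → ℕ) (hc : ∑ i, c i = M) :
    Real.log #{f : Fin M → ι | ∀ i, #{m | f m = i} = c i} ≤
      M * ∑ i, Real.negMulLog (c i / M) + (1 + Real.log M) := by
  rw [log_card_words c hc, mul_sum_negMulLog_div hM c hc]
  have h1 := log_factorial_le_mul_log_sub M
  have h2 := sum_le_sum fun i (_ : i ∈ univ) => mul_log_sub_le_log_factorial (c i)
  rw [sum_sub_distrib, ← Nat.cast_sum, hc] at h2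
  linarith

theorem le_log_card_words {ι : Type*} [Fintype ι] [DecidableEq ι] {M : ℕ} (hM : 0 < M)
    (c : ι → ℕ) (hc : ∑ i, c i = M) :
    M * ∑ i, Real.negMulLog (c i / M) - Fintype.card ι * (1 + Real.log M) ≤
      Real.log #{f : Fin M → ι | ∀ i, #{m | f m = i} = c i} := by
  rw [log_card_words c hc, mul_sum_negMulLog_div hM c hc]
  have h1 := mul_log_sub_le_log_factorial M
  have h : ∀ i, Real.log (c i).factorial ≤ c i * Real.log (c i) - c i + (1 + Real.log M) := by
    intro i
    have h3 : Real.log (c i) ≤ Real.log M := by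
      rcases (c i).eq_zero_or_pos with h0 | h0
      · simpa [h0] using Real.log_natCast_nonneg M
      · refine Real.log_le_log (by positivity) ?_
        rw [← hc]
        exact_mod_cast single_le_sum (fun j _ => (c j).zero_le) (mem_univ i)
    linarith [log_factorial_le_mul_log_sub (c i)]
  have h2 := sum_le_sum fun i (_ : i ∈ univ) => h i
  rw [sum_add_distrib, sum_sub_distrib, ← Nat.cast_sum, hc, sum_const, nsmul_eq_mul,
    card_univ] at h2
  linarith

theorem sum_permMat_eq {M n : ℕ} (f : Fin M → Equiv.Perm (Fin n)) :
    ∑ m, permMat (f m) = ∑ σ, #{m | f m = σ} • permMat σ := by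
  rw [← sum_fiberwise univ f]
  refine sum_congr rfl fun σ _ => ?_
  rw [sum_congr rfl (g := fun _ => permMat σ) (by simp +contextual), sum_const]

theorem Ccoef_eq_card (M n : ℕ) (k : Matrix (Fin n) (Fin n) ℕ) :
    Ccoef M n k = #{f : Fin M → Equiv.Perm (Fin n) | ∑ m, permMat (f m) = k} := by
  rw [Ccoef, Nat.card_eq_fintype_card, Fintype.card_subtype]

theorem card_words_le_Ccoef {M n : ℕ} {k : Matrix (Fin n) (Fin n) ℕ}
    (c : Equiv.Perm (Fin n) → ℕ) (hk : ∑ σ, c σ • permMat σ = k) :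
    #{f : Fin M → Equiv.Perm (Fin n) | ∀ σ, #{m | f m = σ} = c σ} ≤ Ccoef M n k := by
  rw [Ccoef_eq_card]
  refine card_le_card fun f hf => ?_
  simp only [mem_filter, mem_univ, true_and] at hf ⊢
  rw [sum_permMat_eq, ← hk]
  simp only [hf]

theorem Ccoef_le_of_entropy_le {M n : ℕ} (hM : 0 < M) {k : Matrix (Fin n) (Fin n) ℕ} {s : ℝ}
    (hs : ∀ c : Equiv.Perm (Fin n) → ℕ, ∑ σ, c σ = M → ∑ σ, c σ • permMat σ = k →
      ∑ σ, Real.negMulLog (c σ / M) ≤ s) :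
    (Ccoef M n k : ℝ) ≤
      (M + 1 : ℝ) ^ Fintype.card (Equiv.Perm (Fin n)) * Real.exp (M * s + (1 + Real.log M)) := by
  classical
  rw [Ccoef_eq_card, card_eq_sum_card_fiberwise
    (f := fun f (σ : Equiv.Perm (Fin n)) => #{m | f m = σ})
    (t := Fintype.piFinset fun _ => range (M + 1))]
  · have hcard : ((Fintype.piFinset fun _ : Equiv.Perm (Fin n) => range (M + 1)).card : ℝ) =
        (M + 1 : ℝ) ^ Fintype.card (Equiv.Perm (Fin n)) := by
      simp [Fintype.card_piFinset]
    rw [← hcard, ← nsmul_eq_mul, Nat.cast_sum]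
    refine sum_le_card_nsmul _ _ _ fun c _ => ?_
    by_cases hex : ∃ f : Fin M → Equiv.Perm (Fin n),
        ∑ m, permMat (f m) = k ∧ (fun σ => #{m | f m = σ}) = c
    swap
    · rw [filter_eq_empty_iff.2 fun f hf hfc => hex ⟨f, (mem_filter.1 hf).2, hfc⟩, card_empty,
        Nat.cast_zero]
      positivity
    obtain ⟨f, hfk, rfl⟩ := hex
    have hsum : ∑ σ, #{m | f m = σ} = M := by
      rw [← card_eq_sum_card_fiberwise fun _ _ => mem_univ _, card_univ, Fintype.card_fin]
    have hlog := log_card_words_le hM _ hsum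
    have hle := hs _ hsum (by rw [← sum_permMat_eq, hfk])
    have hpos : 0 < #{g : Fin M → Equiv.Perm (Fin n) |
        ∀ σ, #{m | g m = σ} = #{m | f m = σ}} :=
      card_pos.2 ⟨f, by simp⟩
    calc _ ≤ ((#{g : Fin M → Equiv.Perm (Fin n) |
        ∀ σ, #{m | g m = σ} = #{m | f m = σ}} : ℕ) : ℝ) := by
          refine Nat.cast_le.2 (card_le_card fun g hg => ?_)
          simp only [mem_filter, mem_univ, true_and] at hg ⊢
          exact fun σ => congrFun hg.2 σ
      _ ≤ Real.exp (M * s + (1 + Real.log M)) := by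
          rw [← Real.log_le_iff_le_exp (by exact_mod_cast hpos)]
          refine hlog.trans ?_
          gcongr
  · intro f _
    simp only [Fintype.coe_piFinset, coe_range, Set.mem_pi, Set.mem_univ, Set.mem_Iio,
      forall_const]
    exact fun σ => Nat.lt_succ_of_le ((card_le_univ _).trans_eq (Fintype.card_fin M))

theorem sum_permMat_row {n : ℕ} (σ : Equiv.Perm (Fin n)) (i : Fin n) :
    ∑ j, permMat σ i j = 1 := by
  simp [permMat]

theorem sum_permMat_col {n : ℕ} (σ : Equiv.Perm (Fin n)) (j : Fin n) :
    ∑ i, permMat σ i j = 1 := by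
  simp [permMat, ← Equiv.eq_symm_apply]

/-- **Birkhoff's theorem** with real weights, for a nonnegative integer matrix. -/
theorem exists_weights_of_isDS {M n : ℕ} (hM : 0 < M) {k : Matrix (Fin n) (Fin n) ℕ}
    (hk : isDS M n k) :
    ∃ p : Equiv.Perm (Fin n) → ℝ, (∀ σ, 0 ≤ p σ) ∧ ∑ σ, p σ = 1 ∧
      ∀ i j, ∑ σ : Equiv.Perm (Fin n), p σ * (if σ i = j then (1 : ℝ) else 0) =
        (k i j : ℝ) / M := by
  have hM' : (M : ℝ) ≠ 0 := by positivity
  have hmem : (Matrix.of fun i j => (k i j : ℝ) / M) ∈ doublyStochastic ℝ (Fin n) := by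
    rw [mem_doublyStochastic_iff_sum]
    refine ⟨fun i j => by simp only [Matrix.of_apply]; positivity, fun i => ?_, fun j => ?_⟩
    · simp only [Matrix.of_apply]
      rw [← sum_div, ← Nat.cast_sum, hk.1, div_self hM']
    · simp only [Matrix.of_apply]
      rw [← sum_div, ← Nat.cast_sum, hk.2, div_self hM']
  obtain ⟨w, hw, hw1, hwk⟩ := exists_eq_sum_perm_of_mem_doublyStochastic hmem
  refine ⟨w, hw, hw1, fun i j => ?_⟩
  have := congrFun (congrFun hwk i) j
  simpa [Matrix.sum_apply, Equiv.Perm.permMatrix, PEquiv.toMatrix_apply, eq_comm] using this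

/-- **Birkhoff's theorem** over the natural numbers. -/
theorem exists_counts_of_isDS {M n : ℕ} {k : Matrix (Fin n) (Fin n) ℕ} (hk : isDS M n k) :
    ∃ c : Equiv.Perm (Fin n) → ℕ, ∑ σ, c σ = M ∧ ∑ σ, c σ • permMat σ = k := by
  classical
  induction M generalizing k with
  | zero =>
    refine ⟨0, by simp, ?_⟩
    ext i j
    have := hk.1 i
    rw [sum_eq_zero_iff] at this
    simp [this j (mem_univ j)]
  | succ M ih =>
    obtain ⟨p, hp, hp1, hpk⟩ := exists_weights_of_isDS M.succ_pos hk
    obtain ⟨τ, -, hτ⟩ : ∃ τ ∈ univ, 0 < p τ :=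
      exists_lt_of_sum_lt (by simp [hp1])
    have hle : ∀ i j, permMat τ i j ≤ k i j := by
      intro i j
      by_cases h : τ i = j
      · have hpos : (0 : ℝ) < (k i j : ℝ) / (M + 1 : ℕ) := by
          rw [← hpk i j]
          refine sum_pos' (fun σ _ => mul_nonneg (hp σ) (by positivity)) ⟨τ, mem_univ _, ?_⟩
          simpa [h] using hτ
        have : k i j ≠ 0 := by
          intro h0
          simp [h0] at hpos
        simp only [permMat, Matrix.of_apply, h, if_true]
        omega
      · simp [permMat, h]
    obtain ⟨c, hc, hck⟩ := ih (k := Matrix.of fun i j => k i j - permMat τ i j) ⟨fun i => by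
        simp only [Matrix.of_apply]
        rw [sum_tsub_distrib _ fun j _ => hle i j, hk.1, sum_permMat_row, Nat.add_sub_cancel],
      fun j => by
        simp only [Matrix.of_apply]
        rw [sum_tsub_distrib _ fun i _ => hle i j, hk.2, sum_permMat_col, Nat.add_sub_cancel]⟩
    refine ⟨c + Pi.single τ 1, by simp [sum_add_distrib, hc], ?_⟩
    simp only [Pi.add_apply, add_smul, sum_add_distrib, hck]
    ext i j
    simp [Pi.single_apply, Nat.sub_add_cancel (hle i j)]

/-- A fractional decomposition of a nonnegative integer matrix into permutation matrices can be
rounded to an integral one, with an error not depending on the matrix. -/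
theorem exists_counts_near {M n : ℕ} {k : Matrix (Fin n) (Fin n) ℕ} (hk : isDS M n k)
    {q : Equiv.Perm (Fin n) → ℝ} (hq : ∀ σ, 0 ≤ q σ) (hq1 : ∑ σ, q σ = M)
    (hqk : ∀ i j, ∑ σ : Equiv.Perm (Fin n), q σ * (if σ i = j then (1 : ℝ) else 0) = k i j) :
    ∃ c : Equiv.Perm (Fin n) → ℕ, ∑ σ, c σ = M ∧ ∑ σ, c σ • permMat σ = k ∧
      ∀ σ, |(c σ : ℝ) - q σ| ≤ Fintype.card (Equiv.Perm (Fin n)) + 1 := by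
  have hfl : ∀ σ, (⌊q σ⌋₊ : ℝ) ≤ q σ := fun σ => Nat.floor_le (hq σ)
  have hle : ∀ i j, ∑ σ, ⌊q σ⌋₊ * permMat σ i j ≤ k i j := by
    intro i j
    have : ((∑ σ, ⌊q σ⌋₊ * permMat σ i j : ℕ) : ℝ) ≤ k i j := by
      rw [← hqk i j]
      push_cast
      refine sum_le_sum fun σ _ => ?_
      simp only [permMat, Matrix.of_apply, Nat.cast_ite, Nat.cast_one, Nat.cast_zero]
      exact mul_le_mul_of_nonneg_right (hfl σ) (by positivity)
    exact_mod_cast this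
  have hds : isDS (M - ∑ σ, ⌊q σ⌋₊) n
      (Matrix.of fun i j => k i j - ∑ σ, ⌊q σ⌋₊ * permMat σ i j) := by
    refine ⟨fun i => ?_, fun j => ?_⟩ <;> simp only [Matrix.of_apply]
    · rw [sum_tsub_distrib _ fun j _ => hle i j, hk.1, sum_comm]
      simp only [← mul_sum, sum_permMat_row, mul_one]
    · rw [sum_tsub_distrib _ fun i _ => hle i j, hk.2, sum_comm]
      simp only [← mul_sum, sum_permMat_col, mul_one]
  have hfM : ∑ σ, ⌊q σ⌋₊ ≤ M := by
    have : ((∑ σ, ⌊q σ⌋₊ : ℕ) : ℝ) ≤ M := by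
      rw [← hq1]
      push_cast
      exact sum_le_sum fun σ _ => hfl σ
    exact_mod_cast this
  obtain ⟨r, hr, hrk⟩ := exists_counts_of_isDS hds
  refine ⟨fun σ => ⌊q σ⌋₊ + r σ, by rw [sum_add_distrib, hr]; omega, ?_, fun σ => ?_⟩
  · simp only [add_smul, sum_add_distrib, hrk]
    ext i j
    simp only [Matrix.add_apply, Matrix.sum_apply, Matrix.smul_apply, smul_eq_mul,
      Matrix.of_apply]
    exact add_tsub_cancel_of_le (hle i j)
  · have h1 := Nat.lt_floor_add_one (q σ)
    have h2 := hfl σ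
    have h3 : (r σ : ℝ) ≤ Fintype.card (Equiv.Perm (Fin n)) := by
      calc (r σ : ℝ) ≤ ((∑ σ, r σ : ℕ) : ℝ) :=
            Nat.cast_le.2 (single_le_sum (fun τ _ => (r τ).zero_le) (mem_univ σ))
        _ = ∑ σ, (q σ - ⌊q σ⌋₊) := by
            rw [hr, Nat.cast_sub hfM, sum_sub_distrib, hq1, Nat.cast_sum]
        _ ≤ ∑ σ : Equiv.Perm (Fin n), 1 :=
            sum_le_sum fun τ _ => by linarith [Nat.lt_floor_add_one (q τ)]
        _ = _ := by simp
    have h4 : (0 : ℝ) ≤ r σ := by positivity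
    push_cast
    rw [abs_le]
    constructor <;> linarith

theorem tendsto_log_add_one_div_atTop :
    Tendsto (fun M : ℕ => Real.log (M + 1) / (M : ℝ)) atTop (𝓝 0) := by
  have h := (Real.isLittleO_log_id_atTop.tendsto_div_nhds_zero.comp
    (tendsto_natCast_atTop_atTop (R := ℝ))).comp (tendsto_add_atTop_nat 1)
  have h2 : Tendsto (fun M : ℕ => ((M : ℝ) + 1) / M) atTop (𝓝 1) := by
    have := (tendsto_one_div_atTop_nhds_zero_nat (𝕜 := ℝ)).const_add 1
    rw [add_zero] at this
    refine this.congr' ?_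
    filter_upwards [eventually_gt_atTop 0] with M hM
    have : (M : ℝ) ≠ 0 := by positivity
    field_simp
  have h3 := h.mul h2
  rw [zero_mul] at h3
  refine h3.congr fun M => ?_
  have : (M : ℝ) + 1 ≠ 0 := by positivity
  simp only [Function.comp_apply, id, Nat.cast_add, Nat.cast_one]
  field_simp

theorem tendsto_const_mul_one_add_log_div (a : ℝ) :
    Tendsto (fun M : ℕ => a * (1 + Real.log (M + 1)) / (M : ℝ)) atTop (𝓝 0) := by
  have := ((tendsto_one_div_atTop_nhds_zero_nat (𝕜 := ℝ)).add
    tendsto_log_add_one_div_atTop).const_mul a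
  simp only [add_zero, mul_zero] at this
  exact this.congr fun M => by ring

/-- Fix `n, N ≥ 1` and `k ∈ K(N,n)` and let `γ(i,j) = k(i,j)/N`. Then
`log(C_{tN,n}(t·k))/(tN) → H'_G(γ)` as `t → ∞`, where `H'_G(γ)` is the supremum of the
Shannon entropies of probability distributions `p` on `S_n` with `Σ_σ p(σ)·P_σ = γ`. -/
theorem statement_11 (n N : ℕ) (hn : 1 ≤ n) (hN : 1 ≤ N)
    (k : Matrix (Fin n) (Fin n) ℕ) (hk : isDS N n k) :
    Filter.Tendsto
      (fun t : ℕ =>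
        Real.log (Ccoef (t * N) n (Matrix.of fun i j => t * k i j)) / ((t * N : ℕ) : ℝ))
      Filter.atTop
      (nhds (sSup {h : ℝ | ∃ p : Equiv.Perm (Fin n) → ℝ,
        (∀ σ, 0 ≤ p σ) ∧ (∑ σ, p σ) = 1 ∧
        (∀ i j, (∑ σ : Equiv.Perm (Fin n), p σ * (if σ i = j then (1 : ℝ) else 0)) =
          (k i j : ℝ) / N) ∧
        h = -∑ σ : Equiv.Perm (Fin n), p σ * Real.log (p σ)})) := by
  classical
  set S : Set ℝ := {h : ℝ | ∃ p : Equiv.Perm (Fin n) → ℝ,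
        (∀ σ, 0 ≤ p σ) ∧ (∑ σ, p σ) = 1 ∧
        (∀ i j, (∑ σ : Equiv.Perm (Fin n), p σ * (if σ i = j then (1 : ℝ) else 0)) =
          (k i j : ℝ) / N) ∧
        h = -∑ σ : Equiv.Perm (Fin n), p σ * Real.log (p σ)} with hS
  have hent : ∀ p : Equiv.Perm (Fin n) → ℝ,
      -∑ σ, p σ * Real.log (p σ) = ∑ σ, Real.negMulLog (p σ) := by
    intro p
    simp [Real.negMulLog, sum_neg_distrib]
  have hN' : (N : ℝ) ≠ 0 := by positivity
  have hne : S.Nonempty := by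
    obtain ⟨p, hp, hp1, hpk⟩ := exists_weights_of_isDS hN hk
    exact ⟨_, p, hp, hp1, hpk, rfl⟩
  have hbdd : BddAbove S := by
    refine ⟨∑ σ : Equiv.Perm (Fin n), 1, ?_⟩
    rintro _ ⟨p, hp, -, -, rfl⟩
    rw [hent]
    exact sum_le_sum fun σ _ =>
      (Real.negMulLog_le_one_sub_self (hp σ)).trans (by linarith [hp σ])
  have hds : ∀ t, isDS (t * N) n (Matrix.of fun i j => t * k i j) := fun t =>
    ⟨fun i => by simp only [Matrix.of_apply]; rw [← mul_sum, hk.1],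
      fun j => by simp only [Matrix.of_apply]; rw [← mul_sum, hk.2]⟩
  have hMtop : Tendsto (fun t : ℕ => t * N) atTop atTop :=
    tendsto_id.atTop_mul_const' hN
  have hupper : ∀ t : ℕ, 0 < t →
      Real.log (Ccoef (t * N) n (Matrix.of fun i j => t * k i j)) / ((t * N : ℕ) : ℝ) ≤
        sSup S + (Fintype.card (Equiv.Perm (Fin n)) + 1) *
          (1 + Real.log ((t * N : ℕ) + 1)) / ((t * N : ℕ) : ℝ) := by
    intro t ht
    have hM : 0 < t * N := Nat.mul_pos ht hN
    have hle := Ccoef_le_of_entropy_le hM (k := Matrix.of fun i j => t * k i j) (s := sSup S) (by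
      intro c hc hck
      refine le_csSup hbdd ⟨fun σ => c σ / (t * N : ℕ), fun σ => by positivity, ?_, ?_,
        (hent _).symm⟩
      · rw [← sum_div, ← Nat.cast_sum, hc]
        exact div_self (by positivity)
      · intro i j
        have h := congrArg (Nat.cast : ℕ → ℝ) (congrFun (congrFun hck i) j)
        simp only [Matrix.sum_apply, Matrix.smul_apply, permMat, Matrix.of_apply, smul_eq_mul,
          Nat.cast_sum, Nat.cast_mul, Nat.cast_ite, Nat.cast_one, Nat.cast_zero] at h
        simp only [div_mul_eq_mul_div]
        rw [← sum_div, h]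
        have : (t : ℝ) ≠ 0 := by positivity
        push_cast
        field_simp)
    obtain ⟨c, hc, hck⟩ := exists_counts_of_isDS (hds t)
    have hpos : 0 < Ccoef (t * N) n (Matrix.of fun i j => t * k i j) := by
      refine lt_of_lt_of_le (Nat.pos_of_ne_zero fun h0 => ?_) (card_words_le_Ccoef c hck)
      have := card_words_mul_prod_factorial c hc
      rw [h0, zero_mul] at this
      exact Nat.factorial_ne_zero _ this.symm
    generalize t * N = M at *
    have hM' : (0 : ℝ) < M := by exact_mod_cast hM
    have hlog := Real.log_le_log (by exact_mod_cast hpos) hle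
    rw [Real.log_mul (by positivity) (by positivity), Real.log_pow, Real.log_exp] at hlog
    have hmono : Real.log M ≤ Real.log (M + 1) := Real.log_le_log hM' (by linarith)
    rw [div_le_iff₀ hM', add_mul, div_mul_cancel₀ _ hM'.ne']
    have : (0 : ℝ) ≤ Fintype.card (Equiv.Perm (Fin n)) := by positivity
    nlinarith
  have hlower : ∀ a < sSup S, ∀ᶠ t : ℕ in atTop,
      a < Real.log (Ccoef (t * N) n (Matrix.of fun i j => t * k i j)) / ((t * N : ℕ) : ℝ) := by
    intro a ha
    obtain ⟨_, ⟨p, hp, hp1, hpk, rfl⟩, hap⟩ := exists_lt_of_lt_csSup hne ha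
    rw [hent] at hap
    have hex : ∀ t : ℕ, ∃ c : Equiv.Perm (Fin n) → ℕ, ∑ σ, c σ = t * N ∧
        ∑ σ, c σ • permMat σ = Matrix.of (fun i j => t * k i j) ∧
        ∀ σ, |(c σ : ℝ) - (t * N : ℕ) * p σ| ≤ Fintype.card (Equiv.Perm (Fin n)) + 1 := by
      intro t
      refine exists_counts_near (hds t) (fun σ => mul_nonneg (by positivity) (hp σ)) ?_ ?_
      · rw [← mul_sum, hp1, mul_one]
      · intro i j
        simp only [mul_assoc]
        rw [← mul_sum, hpk]
        simp only [Matrix.of_apply]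
        push_cast
        field_simp
    choose c hc hck hcp using hex
    have hconv : ∀ σ, Tendsto (fun t => (c t σ : ℝ) / (t * N : ℕ)) atTop (𝓝 (p σ)) := by
      intro σ
      rw [tendsto_iff_norm_sub_tendsto_zero]
      refine squeeze_zero' (Eventually.of_forall fun t => norm_nonneg _) ?_
        ((tendsto_const_div_atTop_nhds_zero_nat
          (Fintype.card (Equiv.Perm (Fin n)) + 1 : ℝ)).comp hMtop)
      filter_upwards [eventually_gt_atTop 0] with t ht
      have hM : (0 : ℝ) < (t * N : ℕ) := by exact_mod_cast Nat.mul_pos ht hN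
      simp only [Function.comp_apply]
      rw [le_div_iff₀ hM, Real.norm_eq_abs]
      nth_rw 2 [← abs_of_pos hM]
      rw [← abs_mul, sub_mul, div_mul_cancel₀ _ hM.ne', mul_comm (p σ)]
      exact hcp t σ
    have hlim : Tendsto (fun t : ℕ => ∑ σ, Real.negMulLog ((c t σ : ℝ) / (t * N : ℕ)) -
        Fintype.card (Equiv.Perm (Fin n)) * (1 + Real.log ((t * N : ℕ) + 1)) / (t * N : ℕ))
        atTop (𝓝 (∑ σ, Real.negMulLog (p σ) - 0)) :=
      (tendsto_finsetSum _ fun σ _ =>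
        (Real.continuous_negMulLog.tendsto _).comp (hconv σ)).sub
        ((tendsto_const_mul_one_add_log_div _).comp hMtop)
    rw [sub_zero] at hlim
    filter_upwards [hlim.eventually_const_lt hap, eventually_gt_atTop 0] with t hat ht
    refine hat.trans_le ?_
    have hM : 0 < t * N := Nat.mul_pos ht hN
    have hle := card_words_le_Ccoef (M := t * N) (c t) (hck t)
    have hlow := le_log_card_words hM (c t) (hc t)
    have hpos : 0 < #{f : Fin (t * N) → Equiv.Perm (Fin n) | ∀ σ, #{m | f m = σ} = c t σ} := by
      refine Nat.pos_of_ne_zero fun h0 => ?_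
      have := card_words_mul_prod_factorial (c t) (hc t)
      rw [h0, zero_mul] at this
      exact Nat.factorial_ne_zero _ this.symm
    have hlog := Real.log_le_log (by exact_mod_cast hpos) (Nat.cast_le (α := ℝ).2 hle)
    have hM' : (0 : ℝ) < (t * N : ℕ) := by exact_mod_cast hM
    have hmono : Real.log (t * N : ℕ) ≤ Real.log ((t * N : ℕ) + 1) :=
      Real.log_le_log hM' (by linarith)
    rw [le_div_iff₀ hM', sub_mul, div_mul_cancel₀ _ hM'.ne']
    have : (0 : ℝ) ≤ Fintype.card (Equiv.Perm (Fin n)) := by positivity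
    nlinarith
  refine tendsto_order.2 ⟨hlower, fun a ha => ?_⟩
  have hlim : Tendsto (fun t : ℕ => sSup S + (Fintype.card (Equiv.Perm (Fin n)) + 1) *
      (1 + Real.log ((t * N : ℕ) + 1)) / ((t * N : ℕ) : ℝ)) atTop (𝓝 (sSup S + 0)) :=
    ((tendsto_const_mul_one_add_log_div _).comp hMtop).const_add _
  rw [add_zero] at hlim
  filter_upwards [hlim.eventually_lt_const ha, eventually_gt_atTop 0] with t hat ht
  exact (hupper t ht).trans_lt hat
end
end

section
/- Let n, M ≥ 1 be integers and let θ be an n×n matrix with nonnegative real entries such that ∏_{i} θ(i,σ(i)) > 0 for at least one permutation σ ∈ S_n. Then perm(θ) · ⟨perm(θ↑P_M)⟩ ≥ ⟨perm(θ↑P_{M+1})⟩, where the first average is over all collections of n² permutation matrices of size M×M and the second average is over all collections of n² permutation matrices of size (M+1)×(M+1). Equivalently, perm_{B,1}(θ)^1 · perm_{B,M}(θ)^M ≥ perm_{B,M+1}(θ)^{M+1}, which is the M_1 = 1 case of the conjecture (perm_{B,M_1}(θ))^{M_1}·(perm_{B,M_2}(θ))^{M_2} ≥ (perm_{B,M_1+M_2}(θ))^{M_1+M_2}.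 -/
open scoped BigOperators

noncomputable section

/-- The permanent of a real square matrix: `perm(A) = Σ_{σ} ∏_i A(i, σ(i))`. -/
def perm' {α : Type*} [Fintype α] [DecidableEq α] (A : Matrix α α ℝ) : ℝ :=
  ∑ σ : Equiv.Perm α, ∏ i, A i (σ i)

/-- The `P_M`-lifting `θ↑P_M`: the `nM×nM` matrix with entries
`(θ↑P_M)((i,m),(j,m')) = θ(i,j)·P^{(i,j)}(m,m')`. -/
def liftMat {n M : ℕ} (θ : Matrix (Fin n) (Fin n) ℝ)
    (P : Fin n → Fin n → Equiv.Perm (Fin M)) :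
    Matrix (Fin n × Fin M) (Fin n × Fin M) ℝ :=
  Matrix.of fun p q => θ p.1 q.1 * (if P p.1 q.1 p.2 = q.2 then 1 else 0)

/-- `⟨perm(θ↑P_M)⟩`: the arithmetic average of `perm(θ↑P_M)` over all `(M!)^{n²}`
collections `P_M` of `n²` permutation matrices of size `M×M`. -/
def avgLiftPerm (n M : ℕ) (θ : Matrix (Fin n) (Fin n) ℝ) : ℝ :=
  (∑ P : Fin n → Fin n → Equiv.Perm (Fin M), perm' (liftMat θ P)) /
    (Fintype.card (Fin n → Fin n → Equiv.Perm (Fin M)) : ℝ)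

section MatchingSum

variable {ι κ : Type*} [DecidableEq ι] [DecidableEq κ]

/-- The weighted sum over all matchings between `S` and `T` with edges from the list, where an edge
`e` has weight `w e` and unmatched vertices `i`, `j` have weights `r i`, `c j`. -/
def matchingSum (w : ι × κ → ℝ) (r : ι → ℝ) (c : κ → ℝ) :
    List (ι × κ) → Finset ι → Finset κ → ℝ
  | [], S, T => (∏ i ∈ S, r i) * ∏ j ∈ T, c j
  | e :: L, S, T => matchingSum w r c L S T +
      if e.1 ∈ S ∧ e.2 ∈ T then w e * matchingSum w r c L (S.erase e.1) (T.erase e.2) else 0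

variable {w : ι × κ → ℝ} {r : ι → ℝ} {c : κ → ℝ}

lemma matchingSum_nonneg (hw : ∀ e, 0 ≤ w e) (hr : ∀ i, 0 ≤ r i) (hc : ∀ j, 0 ≤ c j)
    (L : List (ι × κ)) (S : Finset ι) (T : Finset κ) : 0 ≤ matchingSum w r c L S T := by
  induction L generalizing S T with
  | nil => exact mul_nonneg (Finset.prod_nonneg fun i _ => hr i) (Finset.prod_nonneg fun j _ => hc j)
  | cons e L ih =>
    rw [matchingSum]
    split_ifs
    · exact add_nonneg (ih _ _) (mul_nonneg (hw _) (ih _ _))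
    · simpa using ih S T

lemma matchingSum_congr_of_eqOn {r' : ι → ℝ} {c' : κ → ℝ} (L : List (ι × κ)) (S : Finset ι)
    (T : Finset κ) (hr : ∀ i ∈ S, r i = r' i) (hc : ∀ j ∈ T, c j = c' j) :
    matchingSum w r c L S T = matchingSum w r' c' L S T := by
  induction L generalizing S T with
  | nil => rw [matchingSum, matchingSum, Finset.prod_congr rfl hr, Finset.prod_congr rfl hc]
  | cons e L ih =>
    rw [matchingSum, matchingSum, ih S T hr hc, ih (S.erase e.1) (T.erase e.2)
      (fun i hi => hr i (Finset.mem_of_mem_erase hi)) fun j hj => hc j (Finset.mem_of_mem_erase hj)]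

lemma matchingSum_swap (L : List (ι × κ)) (S : Finset ι) (T : Finset κ) :
    matchingSum (w ∘ Prod.swap) c r (L.map Prod.swap) T S = matchingSum w r c L S T := by
  induction L generalizing S T with
  | nil => exact mul_comm _ _
  | cons e L ih => simp [matchingSum, ih, and_comm]

lemma matchingSum_expand_left (L : List (ι × κ)) {S : Finset ι} (T : Finset κ) {i : ι}
    (hi : i ∈ S) :
    matchingSum w r c L S T = r i * matchingSum w r c L (S.erase i) T +
      ∑ k ∈ T, (L.count (i, k) * w (i, k)) * matchingSum w r c L (S.erase i) (T.erase k) := by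
  induction L generalizing S T with
  | nil => simp [matchingSum, ← Finset.mul_prod_erase S r hi, mul_assoc]
  | cons e L ih =>
    obtain ⟨a, b⟩ := e
    by_cases hai : a = i
    · subst hai
      have hcount (k : κ) : ((List.count (a, k) ((a, b) :: L) : ℕ) : ℝ) =
          L.count (a, k) + if b = k then 1 else 0 := by
        rw [List.count_cons]
        by_cases h : b = k <;> simp [h]
      simp only [matchingSum, hcount, Finset.notMem_erase, false_and, if_false, add_zero, hi,
        true_and, add_mul, Finset.sum_add_distrib, ite_mul, one_mul, zero_mul, Finset.sum_ite_eq]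
      rw [ih T hi, add_assoc]
    · have hcount (k : κ) : List.count (i, k) ((a, b) :: L) = L.count (i, k) := by
        rw [List.count_cons_of_ne]
        simp [hai]
      simp only [matchingSum, hcount]
      rw [ih T hi]
      by_cases h : a ∈ S ∧ b ∈ T
      · have hiS : i ∈ S.erase a := Finset.mem_erase.2 ⟨Ne.symm hai, hi⟩
        rw [ih (T.erase b) hiS, if_pos h, if_pos ⟨Finset.mem_erase.2 ⟨hai, h.1⟩, h.2⟩]
        have hsum : ∑ k ∈ T, (L.count (i, k) * w (i, k)) *
              (if a ∈ S.erase i ∧ b ∈ T.erase k then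
                w (a, b) * matchingSum w r c L ((S.erase i).erase a) ((T.erase k).erase b) else 0) =
            ∑ k ∈ T.erase b, (L.count (i, k) * w (i, k)) *
              (w (a, b) * matchingSum w r c L ((S.erase i).erase a) ((T.erase k).erase b)) := by
          rw [← Finset.sum_erase_add _ _ h.2]
          simp only [Finset.notMem_erase, and_false, if_false, mul_zero, add_zero]
          refine Finset.sum_congr rfl fun k hk => ?_
          rw [if_pos]
          exact ⟨Finset.mem_erase.2 ⟨hai, h.1⟩,
            Finset.mem_erase.2 ⟨(Finset.ne_of_mem_erase hk).symm, h.2⟩⟩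
        simp only [mul_add, Finset.sum_add_distrib] at hsum ⊢
        rw [hsum, Finset.mul_sum, Finset.erase_right_comm (a := a) (b := i)]
        have hcomm : ∀ k, (T.erase b).erase k = (T.erase k).erase b := fun k =>
          Finset.erase_right_comm
        simp only [hcomm]
        have hswap : ∀ k, w (a, b) * ((L.count (i, k) * w (i, k)) *
              matchingSum w r c L ((S.erase i).erase a) ((T.erase k).erase b)) =
            (L.count (i, k) * w (i, k)) *
              (w (a, b) * matchingSum w r c L ((S.erase i).erase a) ((T.erase k).erase b)) :=
          fun k => by ring
        simp only [hswap]
        ring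
      · rw [if_neg h, if_neg fun h' => h ⟨Finset.mem_of_mem_erase h'.1, h'.2⟩]
        have h0 (k : κ) : ¬(a ∈ S.erase i ∧ b ∈ T.erase k) := fun h' =>
          h ⟨Finset.mem_of_mem_erase h'.1, Finset.mem_of_mem_erase h'.2⟩
        simp only [h0, if_false, add_zero]

lemma matchingSum_expand_right (L : List (ι × κ)) (S : Finset ι) {T : Finset κ} {j : κ}
    (hj : j ∈ T) :
    matchingSum w r c L S T = c j * matchingSum w r c L S (T.erase j) +
      ∑ k ∈ S, (L.count (k, j) * w (k, j)) * matchingSum w r c L (S.erase k) (T.erase j) := by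
  have hcount (k : ι) : (L.map Prod.swap).count (j, k) = L.count (k, j) :=
    List.count_map_of_injective L Prod.swap Prod.swap_injective (k, j)
  rw [← matchingSum_swap, matchingSum_expand_left _ S hj]
  simp only [matchingSum_swap, hcount, Function.comp_apply, Prod.swap_prod_mk]

/-- Correlation inequality for matchings at two vertices on opposite sides. -/
lemma matchingSum_mul_le (hw : ∀ e, 0 ≤ w e) (L : List (ι × κ)) {S : Finset ι} {T : Finset κ}
    {i : ι} {j : κ} (hi : i ∈ S) (hj : j ∈ T) :
    matchingSum w r c L (S.erase i) T * matchingSum w r c L S (T.erase j) ≤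
      matchingSum w r c L S T * matchingSum w r c L (S.erase i) (T.erase j) := by
  induction hN : S.card using Nat.strong_induction_on generalizing S T i j with
  | _ N ih =>
    have hsame : ∀ k ∈ T.erase j,
        matchingSum w r c L (S.erase i) T * matchingSum w r c L (S.erase i) ((T.erase j).erase k) ≤
        matchingSum w r c L (S.erase i) (T.erase k) * matchingSum w r c L (S.erase i) (T.erase j) := by
      intro k hk
      have hjk : j ∈ T.erase k :=
        Finset.mem_erase.2 ⟨(Finset.ne_of_mem_erase hk).symm, hj⟩
      rw [matchingSum_expand_right L (S.erase i) hj,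
        matchingSum_expand_right L (S.erase i) hjk, Finset.erase_right_comm (a := k) (b := j)]
      have hterm : ∀ l ∈ S.erase i, (L.count (l, j) * w (l, j)) *
            matchingSum w r c L ((S.erase i).erase l) (T.erase j) *
              matchingSum w r c L (S.erase i) ((T.erase j).erase k) ≤
          (L.count (l, j) * w (l, j)) *
            matchingSum w r c L ((S.erase i).erase l) ((T.erase j).erase k) *
              matchingSum w r c L (S.erase i) (T.erase j) := by
        intro l hl
        have := ih (S.erase i).card (hN ▸ Finset.card_erase_lt_of_mem hi) hl hk rfl
        have h0 : 0 ≤ L.count (l, j) * w (l, j) := mul_nonneg (Nat.cast_nonneg _) (hw _)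
        nlinarith [mul_le_mul_of_nonneg_left this h0]
      have hsum := Finset.sum_le_sum hterm
      rw [← Finset.sum_mul, ← Finset.sum_mul] at hsum
      nlinarith [hsum]
    rw [matchingSum_expand_left L T hi, matchingSum_expand_left L (T.erase j) hi,
      ← Finset.sum_erase_add _ _ hj]
    have hterm : ∀ k ∈ T.erase j, (L.count (i, k) * w (i, k)) *
          matchingSum w r c L (S.erase i) ((T.erase j).erase k) *
            matchingSum w r c L (S.erase i) T ≤
        (L.count (i, k) * w (i, k)) * matchingSum w r c L (S.erase i) (T.erase k) *
          matchingSum w r c L (S.erase i) (T.erase j) := by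
      intro k hk
      have h0 : 0 ≤ L.count (i, k) * w (i, k) := mul_nonneg (Nat.cast_nonneg _) (hw _)
      nlinarith [mul_le_mul_of_nonneg_left (hsame k hk) h0]
    have hsum := Finset.sum_le_sum hterm
    rw [← Finset.sum_mul, ← Finset.sum_mul] at hsum
    have h0 : 0 ≤ (L.count (i, j) * w (i, j)) *
        matchingSum w r c L (S.erase i) (T.erase j) ^ 2 :=
      mul_nonneg (mul_nonneg (Nat.cast_nonneg _) (hw _)) (sq_nonneg _)
    nlinarith [hsum, h0]

lemma matchingSum_update_left (L : List (ι × κ)) {S : Finset ι} (T : Finset κ) {i : ι}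
    (hi : i ∈ S) (s : ℝ) :
    matchingSum w (Function.update r i (r i + s)) c L S T =
      matchingSum w r c L S T + s * matchingSum w r c L (S.erase i) T := by
  have h (T' : Finset κ) : matchingSum w (Function.update r i (r i + s)) c L (S.erase i) T' =
      matchingSum w r c L (S.erase i) T' :=
    matchingSum_congr_of_eqOn _ _ _
      (fun k hk => Function.update_of_ne (Finset.ne_of_mem_erase hk) _ _) fun _ _ => rfl
  rw [matchingSum_expand_left L T hi, matchingSum_expand_left (r := r) L T hi]
  simp only [h, Function.update_self]
  ring

lemma matchingSum_update_right (L : List (ι × κ)) (S : Finset ι) {T : Finset κ} {j : κ}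
    (hj : j ∈ T) (t : ℝ) :
    matchingSum w r (Function.update c j (c j + t)) L S T =
      matchingSum w r c L S T + t * matchingSum w r c L S (T.erase j) := by
  simp only [← matchingSum_swap (w := w) L]
  exact matchingSum_update_left _ _ hj t

lemma matchingSum_nil_left (w : ι × κ → ℝ) (r : ι → ℝ) (c : κ → ℝ) (L : List (ι × κ))
    (T : Finset κ) : matchingSum w r c L ∅ T = ∏ j ∈ T, c j := by
  induction L with
  | nil => simp [matchingSum]
  | cons e L ih => simp [matchingSum, ih]

/-- With zero weights on unmatched vertices, the matching sum over all edges is a permanent. -/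
lemma sum_perm_prod_eq_matchingSum [Fintype ι] (w : ι × ι → ℝ) {L : List (ι × ι)}
    (hL : ∀ e, L.count e = 1) (S : Finset ι) (σ₀ : Equiv.Perm ι) :
    ∑ σ : Equiv.Perm ι with ∀ i ∉ S, σ i = σ₀ i, ∏ i ∈ S, w (i, σ i) =
      matchingSum w 0 0 L S (S.image σ₀) := by
  induction hN : S.card generalizing S σ₀ with
  | zero =>
    obtain rfl := Finset.card_eq_zero.1 hN
    have : (Finset.univ.filter fun σ : Equiv.Perm ι => ∀ i ∉ (∅ : Finset ι), σ i = σ₀ i) = {σ₀} := by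
      ext σ
      simp [Equiv.ext_iff]
    rw [this]
    simp [matchingSum_nil_left]
  | succ N ih =>
    obtain ⟨i, hi⟩ : S.Nonempty := Finset.card_pos.1 (by omega)
    rw [matchingSum_expand_left _ _ hi]
    simp only [Pi.zero_apply, zero_mul, zero_add, hL, Nat.cast_one, one_mul]
    rw [← Finset.sum_fiberwise_of_maps_to (t := S.image σ₀) (g := fun σ => σ i)]
    · refine Finset.sum_congr rfl fun k hk => ?_
      obtain ⟨l, hl, rfl⟩ := Finset.mem_image.1 hk
      have himage : (S.image σ₀).erase (σ₀ l) =
          (S.erase i).image (Equiv.swap (σ₀ i) (σ₀ l) * σ₀ : Equiv.Perm ι) := by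
        ext m
        simp only [Finset.mem_erase, Finset.mem_image, Equiv.Perm.mul_apply]
        constructor
        · rintro ⟨hm, p, hp, rfl⟩
          by_cases hpi : p = i
          · subst hpi
            refine ⟨l, ⟨fun h => hm (by rw [h]), hl⟩, Equiv.swap_apply_right _ _⟩
          · exact ⟨p, ⟨hpi, hp⟩, Equiv.swap_apply_of_ne_of_ne (fun h => hpi (σ₀.injective h)) hm⟩
        · rintro ⟨p, ⟨hpi, hp⟩, rfl⟩
          by_cases hpl : p = l
          · subst hpl
            exact ⟨by simpa using fun h => hpi (σ₀.injective h).symm, i, hi, by simp⟩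
          · have hne : σ₀ p ≠ σ₀ l := fun h => hpl (σ₀.injective h)
            rw [Equiv.swap_apply_of_ne_of_ne (fun h => hpi (σ₀.injective h)) hne]
            exact ⟨hne, p, hp, rfl⟩
      rw [himage, ← ih _ _ (by rw [Finset.card_erase_of_mem hi, hN]; rfl), Finset.mul_sum]
      refine Finset.sum_congr ?_ fun σ hσ => ?_
      · ext σ
        simp only [Finset.mem_filter, Finset.mem_univ, true_and, Finset.mem_erase, not_and,
          Equiv.Perm.mul_apply]
        constructor
        · rintro ⟨h, hil⟩ m hm
          by_cases hmi : m = i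
          · subst hmi
            simpa using hil
          · have hmS := hm hmi
            rw [h m hmS, Equiv.swap_apply_of_ne_of_ne (fun h => hmi (σ₀.injective h))]
            intro h
            exact hmS (σ₀.injective h ▸ hl)
        · intro h
          refine ⟨fun m hm => ?_, by simpa using h i (fun h => absurd rfl h)⟩
          have hmi : m ≠ i := fun h => hm (h ▸ hi)
          rw [h m fun _ => hm, Equiv.swap_apply_of_ne_of_ne (fun h => hmi (σ₀.injective h))]
          intro h
          exact hm (σ₀.injective h ▸ hl)
      · have hσi : σ i = σ₀ l := by
          have := (Finset.mem_filter.1 hσ).2 i (by simp)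
          simpa using this
        rw [← Finset.mul_prod_erase S _ hi, hσi]
    · intro σ hσ
      have hσ' := (Finset.mem_filter.1 hσ).2
      by_contra hni
      have hinv : σ₀.symm (σ i) ∉ S := fun h => hni (Finset.mem_image.2 ⟨_, h, by simp⟩)
      have := hσ' _ hinv
      rw [Equiv.apply_symm_apply] at this
      exact hinv (by rwa [σ.injective this])

end MatchingSum

/-- The factor `1 - x`, replaced by `1` at the degenerate value `x = 1`. -/
def oneSub (x : ℝ) : ℝ := if x = 1 then 1 else 1 - x

lemma oneSub_pos {x : ℝ} (hx : x ≤ 1) : 0 < oneSub x := by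
  unfold oneSub
  split_ifs with h
  · exact one_pos
  · exact sub_pos.2 (lt_of_le_of_ne hx h)

lemma mul_oneSub_le_of_pos {A B C D K α : ℝ} (hA : 0 < A) (hB : 0 ≤ B) (hC : 0 ≤ C) (hD : 0 < D)
    (hBC : B * C ≤ A * D) (hα₀ : 0 < α) (hα₁ : α < 1)
    (h : ∀ y z : ℝ, 0 < y → 0 < z →
      K * (y * z) ^ α ≤ A + (α * y) * B + (α * z) * C + (α * y) * (α * z) * D) :
    K * (1 - α) ≤ A + α * (1 - α) * D := by
  obtain ⟨b, hb, hBb, hbC⟩ : ∃ b, 0 < b ∧ B ≤ b ∧ b * C ≤ A * D := by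
    rcases hB.eq_or_lt with rfl | hB
    · refine ⟨A * D / (C + 1), by positivity, by positivity, ?_⟩
      rw [div_mul_eq_mul_div, div_le_iff₀ (by positivity)]
      nlinarith [mul_pos hA hD]
    · exact ⟨B, hB, le_rfl, hBC⟩
  have hβ : 0 < 1 - α := sub_pos.2 hα₁
  have hyz := h (A / ((1 - α) * b)) (b / ((1 - α) * D)) (by positivity) (by positivity)
  have hprod : A / ((1 - α) * b) * (b / ((1 - α) * D)) = A / (1 - α) ^ 2 / D := by
    field_simp
  have hupper : A + (α * (A / ((1 - α) * b))) * B + (α * (b / ((1 - α) * D))) * C +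
      (α * (A / ((1 - α) * b))) * (α * (b / ((1 - α) * D))) * D ≤ A / (1 - α) ^ 2 := by
    have h1 : A / ((1 - α) * b) * B ≤ A / (1 - α) := by
      rw [div_mul_eq_mul_div, div_le_div_iff₀ (by positivity) hβ]
      nlinarith [mul_le_mul_of_nonneg_left hBb (mul_pos hA hβ).le]
    have h2 : b / ((1 - α) * D) * C ≤ A / (1 - α) := by
      rw [div_mul_eq_mul_div, div_le_div_iff₀ (by positivity) hβ]
      nlinarith [mul_le_mul_of_nonneg_left hbC hβ.le]
    have h3 : A / ((1 - α) * b) * (b / ((1 - α) * D)) * D = A / (1 - α) ^ 2 := by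
      field_simp
    have h4 : A / (1 - α) ^ 2 = A + α * (A / (1 - α)) + α * (A / (1 - α)) +
        α * α * (A / (1 - α) ^ 2) := by
      field_simp
      ring
    rw [h4, ← h3]
    nlinarith [mul_le_mul_of_nonneg_left h1 hα₀.le, mul_le_mul_of_nonneg_left h2 hα₀.le]
  rw [hprod] at hyz
  have hE : 0 < A / (1 - α) ^ 2 := by positivity
  set E := A / (1 - α) ^ 2 with hEdef
  have hAE : A = E * (1 - α) ^ 2 := by rw [hEdef]; field_simp
  have hK : K ≤ E ^ (1 - α) * D ^ α := by
    have hKE := hyz.trans hupper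
    rw [Real.div_rpow hE.le hD.le, ← mul_div_assoc, div_le_iff₀ (by positivity)] at hKE
    rw [Real.rpow_sub hE, Real.rpow_one, div_mul_eq_mul_div, le_div_iff₀ (by positivity)]
    exact hKE
  have hamgm := Real.geom_mean_le_arith_mean2_weighted hβ.le hα₀.le hE.le hD.le (by ring)
  rw [hAE]
  nlinarith [mul_le_mul_of_nonneg_right (hK.trans hamgm) hβ.le]

lemma mul_oneSub_le {A B C D K α : ℝ} (hA : 0 ≤ A) (hB : 0 ≤ B) (hC : 0 ≤ C) (hD : 0 ≤ D)
    (hBC : B * C ≤ A * D) (hα₀ : 0 ≤ α) (hα₁ : α ≤ 1)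
    (h : ∀ y z : ℝ, 0 < y → 0 < z →
      K * (y * z) ^ α ≤ A + (α * y) * B + (α * z) * C + (α * y) * (α * z) * D) :
    K * oneSub α ≤ A + α * oneSub α * D := by
  rcases hα₀.eq_or_lt with rfl | hα₀
  · simpa [oneSub] using h 1 1 one_pos one_pos
  rcases hα₁.eq_or_lt with rfl | hα₁
  · simp only [oneSub, if_true, mul_one, one_mul]
    refine le_of_forall_pos_le_add fun ε hε => ?_
    obtain ⟨t, ht1, ht⟩ : ∃ t : ℝ, 1 ≤ t ∧ B + C ≤ ε * t :=
      ⟨max 1 ((B + C) / ε), le_max_left _ _, by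
        rw [← div_le_iff₀' hε]; exact le_max_right _ _⟩
    have ht0 : 0 < t := by linarith
    have htt := h t t ht0 ht0
    rw [Real.rpow_one] at htt
    have h1 : A ≤ A * (t * t) := le_mul_of_one_le_right hA (by nlinarith)
    have h2 : t * (B + C) ≤ t * (ε * t) := mul_le_mul_of_nonneg_left ht ht0.le
    have : K * (t * t) ≤ (A + D + ε) * (t * t) := by nlinarith
    exact le_of_mul_le_mul_right this (by positivity)
  · rw [oneSub, if_neg hα₁.ne]
    have hβ : 0 < 1 - α := sub_pos.2 hα₁
    refine le_of_forall_pos_le_add fun ε hε => ?_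
    have hδ : 0 < ε / 2 := by positivity
    have key := mul_oneSub_le_of_pos (A := A + ε / 2) (D := D + ε / 2) (B := B) (C := C) (K := K)
      (by positivity) hB hC (by positivity) (by nlinarith [mul_nonneg hA hδ.le, mul_nonneg hD hδ.le])
      hα₀ hα₁ (fun y z hy hz => (h y z hy hz).trans (by
        have : 0 ≤ (α * y) * (α * z) * (ε / 2) := by positivity
        nlinarith))
    have h1 : α * (1 - α) * (ε / 2) ≤ 1 * (ε / 2) :=
      mul_le_mul_of_nonneg_right (by nlinarith) hδ.le
    nlinarith

section Schrijver

variable {ι : Type*} [DecidableEq ι]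

lemma sum_filter_update {E : Type*} [DecidableEq E] (f : E → ι) (x y : E → ℝ) {F : Finset E}
    {e : E} (he : e ∉ F) (s : ℝ) :
    (fun i => ∑ e' ∈ insert e F with f e' = i, x e' * Function.update y e s e') =
      Function.update (fun i => ∑ e' ∈ F with f e' = i, x e' * y e') (f e)
        ((∑ e' ∈ F with f e' = f e, x e' * y e') + x e * s) := by
  have hF (i : ι) : ∑ e' ∈ F with f e' = i, x e' * Function.update y e s e' =
      ∑ e' ∈ F with f e' = i, x e' * y e' := by
    refine Finset.sum_congr rfl fun e' he' => ?_
    rw [Function.update_of_ne]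
    rintro rfl
    exact he (Finset.mem_filter.1 he').1
  funext i
  rw [Finset.filter_insert]
  split_ifs with h
  · subst h
    rw [Finset.sum_insert (fun h => he (Finset.mem_filter.1 h).1), hF, Function.update_self,
      Function.update_self, add_comm]
  · rw [hF, Function.update_of_ne (Ne.symm h)]

variable [Fintype ι]

lemma prod_rpow_le_prod_sum {E : Type*} [Fintype E] (f : E → ι) {x y : E → ℝ}
    (hx : ∀ e, 0 ≤ x e) (hy : ∀ e, 0 < y e) (hf : ∀ i, ∑ e with f e = i, x e = 1) :
    ∏ e, y e ^ x e ≤ ∏ i, ∑ e with f e = i, x e * y e := by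
  rw [← Finset.prod_fiberwise Finset.univ f]
  refine Finset.prod_le_prod (fun i _ => Finset.prod_nonneg fun e _ =>
    Real.rpow_nonneg (hy e).le _) fun i _ => ?_
  exact Real.geom_mean_le_arith_mean_weighted _ x y (fun e _ => hx e) (hf i) fun e _ => (hy e).le

lemma prod_oneSub_le_matchingSum {x : ι × ι → ℝ} (hx : ∀ e, 0 ≤ x e) (hx' : ∀ e, x e ≤ 1)
    (hrow : ∀ i, ∑ e with e.1 = i, x e = 1) (hcol : ∀ j, ∑ e with e.2 = j, x e = 1)
    (L : List (ι × ι)) (hL : L.Nodup) (F : Finset (ι × ι)) (hF : ∀ e, e ∈ F ↔ e ∉ L)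
    (y z : ι × ι → ℝ) (hy : ∀ e, 0 < y e) (hz : ∀ e, 0 < z e) :
    (L.map fun e => oneSub (x e)).prod * ∏ e ∈ F, (y e * z e) ^ x e ≤
      matchingSum (fun e => x e * oneSub (x e)) (fun i => ∑ e ∈ F with e.1 = i, x e * y e)
        (fun j => ∑ e ∈ F with e.2 = j, x e * z e) L Finset.univ Finset.univ := by
  induction L generalizing F y z with
  | nil =>
    obtain rfl : F = Finset.univ := Finset.eq_univ_of_forall fun e => by simp [hF]
    simp only [List.map_nil, List.prod_nil, one_mul, matchingSum,
      Real.mul_rpow (hy _).le (hz _).le, Finset.prod_mul_distrib]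
    exact mul_le_mul (prod_rpow_le_prod_sum _ hx hy hrow) (prod_rpow_le_prod_sum _ hx hz hcol)
      (Finset.prod_nonneg fun e _ => Real.rpow_nonneg (hz e).le _)
      (Finset.prod_nonneg fun i _ => Finset.sum_nonneg fun e _ => mul_nonneg (hx e) (hy e).le)
  | cons e L ih =>
    obtain ⟨heL, hL⟩ := List.nodup_cons.1 hL
    have heF : e ∉ F := by simp [hF]
    have hw : ∀ e, 0 ≤ x e * oneSub (x e) := fun e => mul_nonneg (hx e) (oneSub_pos (hx' e)).le
    have hnonneg := matchingSum_nonneg (L := L) hw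
      (r := fun i => ∑ e ∈ F with e.1 = i, x e * y e)
      (c := fun j => ∑ e ∈ F with e.2 = j, x e * z e)
      (fun i => Finset.sum_nonneg fun e _ => mul_nonneg (hx e) (hy e).le)
      (fun j => Finset.sum_nonneg fun e _ => mul_nonneg (hx e) (hz e).le)
    rw [matchingSum, if_pos ⟨Finset.mem_univ _, Finset.mem_univ _⟩, List.map_cons, List.prod_cons,
      mul_assoc, mul_comm]
    refine mul_oneSub_le (hnonneg _ _) (hnonneg _ _) (hnonneg _ _) (hnonneg _ _)
      (matchingSum_mul_le hw L (Finset.mem_univ _) (Finset.mem_univ _)) (hx e) (hx' e)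
      fun s t hs ht => ?_
    have key := ih hL (insert e F) (fun e' => by
        by_cases h : e' = e <;> simp [h, hF, heL]) (Function.update y e s) (Function.update z e t)
      (fun e' => by
        by_cases h : e' = e
        · rw [h, Function.update_self]; exact hs
        · rw [Function.update_of_ne h]; exact hy e')
      (fun e' => by
        by_cases h : e' = e
        · rw [h, Function.update_self]; exact ht
        · rw [Function.update_of_ne h]; exact hz e')
    rw [sum_filter_update Prod.fst x y heF, sum_filter_update Prod.snd x z heF,
      matchingSum_update_left _ _ (Finset.mem_univ _),
      matchingSum_update_right _ _ (Finset.mem_univ _),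
      matchingSum_update_right _ _ (Finset.mem_univ _), Finset.prod_insert heF] at key
    have hprod : ∏ e' ∈ F, (Function.update y e s e' * Function.update z e t e') ^ x e' =
        ∏ e' ∈ F, (y e' * z e') ^ x e' := by
      refine Finset.prod_congr rfl fun e' he' => ?_
      have h : e' ≠ e := fun h => heF (h ▸ he')
      rw [Function.update_of_ne h, Function.update_of_ne h]
    rw [hprod, Function.update_self, Function.update_self] at key
    linarith

/-- Schrijver's permanental inequality, sharpened at entries equal to `1`. -/
theorem prod_oneSub_le_sum_perm {x : ι × ι → ℝ} (hx : ∀ e, 0 ≤ x e)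
    (hrow : ∀ i, ∑ e with e.1 = i, x e = 1) (hcol : ∀ j, ∑ e with e.2 = j, x e = 1) :
    ∏ e, oneSub (x e) ≤ ∑ σ : Equiv.Perm ι, ∏ i, x (i, σ i) * oneSub (x (i, σ i)) := by
  have hx' : ∀ e, x e ≤ 1 := fun e => by
    rw [← hrow e.1]
    exact Finset.single_le_sum (f := x) (fun e _ => hx e) (by simp)
  have h := prod_oneSub_le_matchingSum hx hx' hrow hcol Finset.univ.toList
    (Finset.nodup_toList _) ∅ (by simp) 1 1 (by simp) (by simp)
  simp only [Finset.prod_map_toList, Finset.prod_empty, mul_one, Finset.filter_empty,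
    Finset.sum_empty] at h
  refine h.trans_eq ?_
  have hperm := sum_perm_prod_eq_matchingSum (fun e => x e * oneSub (x e))
    (L := (Finset.univ : Finset (ι × ι)).toList)
    (fun e => List.count_eq_one_of_mem (Finset.nodup_toList _) (by simp)) Finset.univ 1
  simp only [Finset.mem_univ, not_true_eq_false, false_imp_iff, implies_true, Finset.filter_true,
    Equiv.Perm.coe_one, Finset.image_id] at hperm
  rw [hperm]
  rfl

end Schrijver

section Lifting

lemma card_perm_eqOn {α : Type*} [Fintype α] [DecidableEq α] (K : Finset α) (g : α → α)
    (hg : Set.InjOn g K) :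
    (Finset.univ.filter fun π : Equiv.Perm α => ∀ m ∈ K, π m = g m).card =
      (Fintype.card α - K.card).factorial := by
  obtain ⟨σ, hσ⟩ : ∃ σ : Equiv.Perm α, ∀ m ∈ K, σ m = g m := by
    obtain ⟨e, he⟩ := Finset.exists_equiv_extend_of_card_eq (t := (Finset.univ : Finset α))
      (Finset.card_univ (α := α)).symm (Finset.subset_univ _) hg
    exact ⟨e.trans (Equiv.subtypeUnivEquiv Finset.mem_univ), he⟩
  have hcard : Fintype.card {f : Equiv.Perm α // ∀ a, ¬a ∉ K → f a = a} =
      (Fintype.card α - K.card).factorial := by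
    rw [← Fintype.card_congr (Equiv.Perm.subtypeEquivSubtypePerm (· ∉ K)), Fintype.card_perm,
      Fintype.card_subtype_compl, Fintype.card_coe]
  rw [← hcard, Fintype.card_subtype]
  refine Finset.card_equiv (Equiv.mulLeft σ⁻¹) fun π => ?_
  simp only [Finset.mem_filter, Finset.mem_univ, true_and, not_not, Equiv.coe_mulLeft,
    Equiv.Perm.mul_apply, Equiv.Perm.inv_eq_iff_eq]
  exact forall₂_congr fun m hm => by rw [hσ m hm, eq_comm]

variable {n N : ℕ}

/-- The number of entries of the permutation `τ` in the block `e`. -/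
def blockCount (τ : Equiv.Perm (Fin n × Fin N)) (e : Fin n × Fin n) : ℕ :=
  (Finset.univ.filter fun m => (τ (e.1, m)).1 = e.2).card

lemma sum_row_blockCount (τ : Equiv.Perm (Fin n × Fin N)) (i : Fin n) :
    ∑ e with e.1 = i, blockCount τ e = N := by
  have h := Finset.card_eq_sum_card_fiberwise (s := (Finset.univ : Finset (Fin N)))
    (t := (Finset.univ : Finset (Fin n))) (f := fun m => (τ (i, m)).1) (by simp)
  rw [Finset.card_univ, Fintype.card_fin] at h
  rw [Finset.sum_filter, Fintype.sum_prod_type, Finset.sum_eq_single i]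
  · simpa [blockCount] using h.symm
  · intro k _ hk
    simp [hk]
  · simp

lemma sum_col_blockCount (τ : Equiv.Perm (Fin n × Fin N)) (j : Fin n) :
    ∑ e with e.2 = j, blockCount τ e = N := by
  have h : (Finset.univ.filter fun p : Fin n × Fin N => (τ p).1 = j).card = N := by
    rw [Finset.card_equiv (t := Finset.univ.filter fun p : Fin n × Fin N => p.1 = j) τ (by simp)]
    have : (Finset.univ.filter fun p : Fin n × Fin N => p.1 = j) = ({j} : Finset (Fin n)) ×ˢ Finset.univ := by
      ext ⟨a, b⟩; simp [eq_comm]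
    simp [this]
  rw [Finset.sum_filter, Fintype.sum_prod_type]
  simp only [Finset.sum_ite_eq', Finset.mem_univ, if_true, blockCount]
  rw [Finset.card_filter, Fintype.sum_prod_type] at h
  simpa only [Finset.card_filter] using h

/-- The contribution of a permutation with block counts `k` to the averaged permanent. -/
def blockWeight (θ : Matrix (Fin n) (Fin n) ℝ) (N : ℕ) (k : Fin n × Fin n → ℕ) : ℝ :=
  ∏ e, θ e.1 e.2 ^ k e * ((N - k e).factorial / N.factorial : ℝ)

lemma avgLiftPerm_eq_sum_blockWeight (θ : Matrix (Fin n) (Fin n) ℝ) :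
    avgLiftPerm n N θ =
      ∑ τ : Equiv.Perm (Fin n × Fin N), blockWeight θ N (blockCount τ) := by
  have hcard : (Fintype.card (Fin n → Fin n → Equiv.Perm (Fin N)) : ℝ) =
      ∏ _i : Fin n, ∏ _j : Fin n, (N.factorial : ℝ) := by
    simp [Fintype.card_perm]
  rw [avgLiftPerm, hcard]
  simp only [perm']
  rw [Finset.sum_comm, Finset.sum_div]
  refine Finset.sum_congr rfl fun τ _ => ?_
  have hentry (P : Fin n → Fin n → Equiv.Perm (Fin N)) : ∏ p, liftMat θ P p (τ p) =
      ∏ i, ∏ j, ∏ m with (τ (i, m)).1 = j,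
        θ i j * (if P i j m = (τ (i, m)).2 then (1 : ℝ) else 0) := by
    rw [Fintype.prod_prod_type]
    refine Finset.prod_congr rfl fun i _ => ?_
    rw [← Finset.prod_fiberwise Finset.univ fun m => (τ (i, m)).1]
    refine Finset.prod_congr rfl fun j _ => Finset.prod_congr rfl fun m hm => ?_
    simp only [Finset.mem_filter, Finset.mem_univ, true_and] at hm
    simp [liftMat, hm]
  have hblock (i j : Fin n) : ∑ π : Equiv.Perm (Fin N), ∏ m with (τ (i, m)).1 = j,
        θ i j * (if π m = (τ (i, m)).2 then (1 : ℝ) else 0) =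
      θ i j ^ blockCount τ (i, j) * (N - blockCount τ (i, j)).factorial := by
    simp only [Finset.prod_mul_distrib, Finset.prod_const, Finset.prod_ite_zero, ← Finset.mul_sum]
    have hinj : Set.InjOn (fun m => (τ (i, m)).2)
        (Finset.univ.filter fun m => (τ (i, m)).1 = j : Finset (Fin N)) := by
      intro a ha b hb hab
      simp only [Finset.coe_filter, Finset.mem_univ, true_and, Set.mem_ofPred_eq] at ha hb
      have := τ.injective (Prod.ext (ha.trans hb.symm) hab)
      exact (Prod.ext_iff.1 this).2
    have := card_perm_eqOn _ _ hinj
    rw [Fintype.card_fin] at this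
    rw [blockCount, ← this]
    simp
  have hsum : ∑ P : Fin n → Fin n → Equiv.Perm (Fin N), ∏ p, liftMat θ P p (τ p) =
      ∏ i, ∏ j, θ i j ^ blockCount τ (i, j) * ((N - blockCount τ (i, j)).factorial : ℝ) := by
    simp only [hentry, ← hblock]
    simp only [Finset.prod_univ_sum, Fintype.piFinset_univ]
  rw [hsum, blockWeight, Fintype.prod_prod_type, ← Finset.prod_div_distrib]
  refine Finset.prod_congr rfl fun i _ => ?_
  rw [← Finset.prod_div_distrib]
  exact Finset.prod_congr rfl fun j _ => mul_div_assoc _ _ _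

lemma prod_perm_eq_prod_ite (σ : Equiv.Perm (Fin n)) (f : Fin n × Fin n → ℝ) :
    ∏ i, f (i, σ i) = ∏ e, if σ e.1 = e.2 then f e else 1 := by
  simp [Fintype.prod_prod_type]

/-- Comparison of block weights of consecutive degrees, obtained from Schrijver's inequality. -/
lemma blockWeight_succ_le {M : ℕ} {θ : Matrix (Fin n) (Fin n) ℝ} (hθ : ∀ i j, 0 ≤ θ i j)
    (k : Fin n × Fin n → ℕ) (hrow : ∀ i, ∑ e with e.1 = i, k e = M + 1)
    (hcol : ∀ j, ∑ e with e.2 = j, k e = M + 1) :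
    blockWeight θ (M + 1) k ≤ ∑ σ : Equiv.Perm (Fin n), (∏ i, (k (i, σ i) : ℝ)) *
      ((∏ i, θ i (σ i) * (((M : ℝ) + 1) ^ 2)⁻¹) *
        blockWeight θ M fun e => k e - if σ e.1 = e.2 then 1 else 0) := by
  have hN : (0 : ℝ) < M + 1 := by positivity
  set x : Fin n × Fin n → ℝ := fun e => k e / (M + 1) with hxdef
  have hx : ∀ e, 0 ≤ x e := fun e => by positivity
  have hrow' : ∀ i, ∑ e with e.1 = i, x e = 1 := fun i => by
    rw [hxdef, ← Finset.sum_div, ← Nat.cast_sum, hrow, Nat.cast_succ, div_self hN.ne']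
  have hcol' : ∀ j, ∑ e with e.2 = j, x e = 1 := fun j => by
    rw [hxdef, ← Finset.sum_div, ← Nat.cast_sum, hcol, Nat.cast_succ, div_self hN.ne']
  have hkle : ∀ e, k e ≤ M + 1 := fun e => by
    rw [← hrow e.1]
    exact Finset.single_le_sum (f := k) (fun _ _ => Nat.zero_le _) (by simp)
  have hV : ∀ e, 0 < oneSub (x e) := fun e => oneSub_pos <| by
    rw [hxdef, div_le_one hN]
    exact_mod_cast hkle e
  have hprodV : 0 < ∏ e, oneSub (x e) := Finset.prod_pos fun e _ => hV e
  have hW : 0 ≤ blockWeight θ (M + 1) k := Finset.prod_nonneg fun e _ =>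
    mul_nonneg (pow_nonneg (hθ _ _) _) (by positivity)
  have hS := mul_le_mul_of_nonneg_left (prod_oneSub_le_sum_perm hx hrow' hcol')
    (div_nonneg hW hprodV.le)
  rw [div_mul_cancel₀ _ hprodV.ne', Finset.mul_sum] at hS
  refine hS.trans_eq (Finset.sum_congr rfl fun σ _ => ?_)
  by_cases hzero : ∃ i, k (i, σ i) = 0
  · obtain ⟨i, hi⟩ := hzero
    rw [Finset.prod_eq_zero (Finset.mem_univ i) (by simp [hxdef, hi]),
      Finset.prod_eq_zero (f := fun i => (k (i, σ i) : ℝ)) (Finset.mem_univ i) (by simp [hi])]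
    simp
  · push Not at hzero
    rw [prod_perm_eq_prod_ite σ fun e => x e * oneSub (x e),
      prod_perm_eq_prod_ite σ fun e => (k e : ℝ),
      prod_perm_eq_prod_ite σ fun e => θ e.1 e.2 * (((M : ℝ) + 1) ^ 2)⁻¹,
      blockWeight, blockWeight, ← Finset.prod_div_distrib, ← Finset.prod_mul_distrib,
      ← Finset.prod_mul_distrib, ← Finset.prod_mul_distrib]
    refine Finset.prod_congr rfl fun e _ => ?_
    obtain ⟨i, j⟩ := e
    have hVne := (hV (i, j)).ne'
    have hM : (M.factorial : ℝ) ≠ 0 := by positivity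
    by_cases hσ : σ i = j
    · obtain ⟨l, hl⟩ := Nat.exists_eq_succ_of_ne_zero (hσ ▸ hzero i : k (i, j) ≠ 0)
      simp only [hσ, if_true]
      have h1 : M + 1 - k (i, j) = M - (k (i, j) - 1) := by omega
      have h2 : θ i j ^ k (i, j) = θ i j * θ i j ^ (k (i, j) - 1) := by
        rw [hl, Nat.succ_sub_one, pow_succ']
      rw [h1, h2, Nat.factorial_succ, show x (i, j) = k (i, j) / (M + 1) from rfl] at *
      push_cast
      field_simp
    · simp only [hσ, if_false, Nat.sub_zero, mul_one, one_mul]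
      have hlt : k (i, j) < M + 1 := by
        have hsub : ∑ e ∈ {(i, j), (i, σ i)}, k e ≤ ∑ e with e.1 = i, k e :=
          Finset.sum_le_sum_of_subset (by intro e he; aesop)
        rw [Finset.sum_pair (by simpa using Ne.symm hσ), hrow] at hsub
        have := Nat.pos_of_ne_zero (hzero i)
        omega
      have hVeq : oneSub (x (i, j)) = ((M : ℝ) + 1 - k (i, j)) / (M + 1) := by
        rw [oneSub, if_neg]
        · rw [hxdef]; field_simp
        · rw [hxdef]
          simp only
          rw [div_eq_one_iff_eq hN.ne']
          exact_mod_cast hlt.ne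
      have h1 : M + 1 - k (i, j) = (M - k (i, j)) + 1 := by omega
      have h2 : (((M - k (i, j) : ℕ) : ℝ) + 1) = (M : ℝ) + 1 - k (i, j) := by
        rw [Nat.cast_sub (by omega)]; ring
      have h3 : (M : ℝ) + 1 - k (i, j) ≠ 0 := by
        rw [← h2]; positivity
      rw [hVeq, h1, Nat.factorial_succ, Nat.factorial_succ]
      push_cast
      rw [h2]
      field_simp

/-- Splitting off the last layer. -/
def layerEquiv (n M : ℕ) : Fin n × Fin (M + 1) ≃ (Fin n × Fin M) ⊕ Fin n where
  toFun p := Fin.lastCases (motive := fun _ => (Fin n × Fin M) ⊕ Fin n) (Sum.inr p.1)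
    (fun m => Sum.inl (p.1, m)) p.2
  invFun := Sum.elim (fun p => (p.1, p.2.castSucc)) fun i => (i, Fin.last M)
  left_inv p := by
    obtain ⟨i, m⟩ := p
    induction m using Fin.lastCases <;> simp
  right_inv p := by
    rcases p with ⟨i, m⟩ | i <;> simp

/-- The permutation acting as `σ` on the last layer and as `τ` on the other ones. -/
def extendPerm {M : ℕ} (σ : Equiv.Perm (Fin n)) (τ : Equiv.Perm (Fin n × Fin M)) :
    Equiv.Perm (Fin n × Fin (M + 1)) :=
  (layerEquiv n M).symm.permCongr (Equiv.Perm.sumCongr τ σ)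

lemma extendPerm_last {M : ℕ} (σ : Equiv.Perm (Fin n)) (τ : Equiv.Perm (Fin n × Fin M))
    (i : Fin n) : extendPerm σ τ (i, Fin.last M) = (σ i, Fin.last M) := by
  simp [extendPerm, layerEquiv, Equiv.permCongr_apply]

lemma extendPerm_castSucc {M : ℕ} (σ : Equiv.Perm (Fin n)) (τ : Equiv.Perm (Fin n × Fin M))
    (i : Fin n) (m : Fin M) :
    extendPerm σ τ (i, m.castSucc) = ((τ (i, m)).1, (τ (i, m)).2.castSucc) := by
  simp [extendPerm, layerEquiv, Equiv.permCongr_apply]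

lemma blockCount_extendPerm {M : ℕ} (σ : Equiv.Perm (Fin n)) (τ : Equiv.Perm (Fin n × Fin M))
    (e : Fin n × Fin n) :
    blockCount (extendPerm σ τ) e = blockCount τ e + if σ e.1 = e.2 then 1 else 0 := by
  simp only [blockCount, Finset.card_filter]
  rw [Fin.sum_univ_castSucc]
  simp [extendPerm_last, extendPerm_castSucc]

lemma exists_extendPerm_eq {M : ℕ} {σ : Equiv.Perm (Fin n)}
    {τ : Equiv.Perm (Fin n × Fin (M + 1))} (h : ∀ i, τ (i, Fin.last M) = (σ i, Fin.last M)) :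
    ∃ τ', extendPerm σ τ' = τ := by
  set ρ := (layerEquiv n M).permCongr τ with hρ
  have hinr : ∀ i, ρ (Sum.inr i) = Sum.inr (σ i) := fun i => by
    simp [hρ, Equiv.permCongr_apply, layerEquiv, h]
  obtain ⟨⟨τ', σ'⟩, hτ'⟩ := Equiv.Perm.mem_sumCongrHom_range_of_perm_mapsTo_inl
    ((Equiv.Perm.perm_mapsTo_inl_iff_mapsTo_inr ρ).2 (by
      rintro _ ⟨i, rfl⟩
      exact ⟨σ i, (hinr i).symm⟩))
  have hσ : σ' = σ := by
    ext1 i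
    have := hinr i
    rw [← hτ'] at this
    simpa using this
  subst hσ
  refine ⟨τ', ?_⟩
  have hτ'' : Equiv.Perm.sumCongr τ' σ' = ρ := hτ'
  rw [extendPerm, hτ'', hρ]
  ext1 p
  simp [Equiv.permCongr_apply]

lemma extendPerm_injective {M : ℕ} (σ : Equiv.Perm (Fin n)) :
    Function.Injective (extendPerm (M := M) σ) := by
  intro τ τ' h
  ext1 ⟨i, m⟩
  have := congrArg (· (i, m.castSucc)) h
  simp only [extendPerm_castSucc, Prod.mk.injEq, Fin.castSucc_inj] at this
  exact Prod.ext this.1 this.2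

/-- Permuting within each row block. -/
def withinBlocks (f : Fin n → Equiv.Perm (Fin N)) : Equiv.Perm (Fin n × Fin N) where
  toFun p := (p.1, f p.1 p.2)
  invFun p := (p.1, (f p.1).symm p.2)
  left_inv p := by simp
  right_inv p := by simp

lemma blockCount_withinBlocks_mul (f g : Fin n → Equiv.Perm (Fin N))
    (τ : Equiv.Perm (Fin n × Fin N)) :
    blockCount (withinBlocks f * τ * withinBlocks g) = blockCount τ := by
  funext e
  simp only [blockCount, Finset.card_filter]
  exact Fintype.sum_equiv (g e.1) _ _ fun m => rfl

/-- By symmetry, the positions of a prescribed set of entries inside their blocks do not matter. -/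
lemma sum_perm_prescribed_eq {M : ℕ} (σ : Equiv.Perm (Fin n))
    (p : Fin n → Fin (M + 1) × Fin (M + 1)) (H : (Fin n × Fin n → ℕ) → ℝ) :
    ∑ τ : Equiv.Perm (Fin n × Fin (M + 1)) with ∀ i, τ (i, (p i).1) = (σ i, (p i).2),
        H (blockCount τ) =
      ∑ τ : Equiv.Perm (Fin n × Fin M),
        H (fun e => blockCount τ e + if σ e.1 = e.2 then 1 else 0) := by
  set f : Fin n → Equiv.Perm (Fin (M + 1)) :=
    fun j => Equiv.swap (Fin.last M) (p (σ.symm j)).2 with hf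
  set g : Fin n → Equiv.Perm (Fin (M + 1)) :=
    fun i => Equiv.swap (p i).1 (Fin.last M) with hg
  symm
  refine Finset.sum_bij (fun τ _ => withinBlocks f * extendPerm σ τ * withinBlocks g)
    (fun τ _ => ?_) (fun τ _ τ' _ h => ?_) (fun τ hτ => ?_) (fun τ _ => ?_)
  · simp [withinBlocks, hf, hg, extendPerm_last]
  · exact extendPerm_injective σ (mul_left_cancel (mul_right_cancel h))
  · have hτ := (Finset.mem_filter.1 hτ).2
    obtain ⟨τ', hτ'⟩ := exists_extendPerm_eq (σ := σ)
      (τ := (withinBlocks f)⁻¹ * τ * (withinBlocks g)⁻¹) (fun i => by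
        rw [Equiv.Perm.mul_apply, Equiv.Perm.mul_apply, Equiv.Perm.inv_eq_iff_eq]
        have h1 : (withinBlocks g)⁻¹ (i, Fin.last M) = (i, (p i).1) := by
          rw [Equiv.Perm.inv_eq_iff_eq]
          simp [withinBlocks, hg]
        rw [h1, hτ]
        simp [withinBlocks, hf])
    refine ⟨τ', Finset.mem_univ _, ?_⟩
    rw [hτ']
    group
  · rw [blockCount_withinBlocks_mul]
    congr 1
    funext e
    exact (blockCount_extendPerm σ τ e).symm

lemma prod_blockCount_eq_sum {M : ℕ} (σ : Equiv.Perm (Fin n))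
    (τ : Equiv.Perm (Fin n × Fin (M + 1))) :
    ∏ i, (blockCount τ (i, σ i) : ℝ) = ∑ p : Fin n → Fin (M + 1) × Fin (M + 1),
      if ∀ i, τ (i, (p i).1) = (σ i, (p i).2) then 1 else 0 := by
  have h (i : Fin n) : (blockCount τ (i, σ i) : ℝ) =
      ∑ q : Fin (M + 1) × Fin (M + 1), if τ (i, q.1) = (σ i, q.2) then 1 else 0 := by
    rw [blockCount, Finset.card_filter, Fintype.sum_prod_type]
    push_cast
    refine Finset.sum_congr rfl fun m _ => ?_
    simp [Prod.ext_iff, ite_and]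
  simp only [h, Finset.prod_univ_sum, Fintype.piFinset_univ, Finset.prod_ite_zero,
    Finset.prod_const_one, Finset.mem_univ, true_imp_iff]

end Lifting

/-- For `n, M ≥ 1` and a nonnegative `n×n` matrix `θ` having a permutation
of positive weight: `perm(θ) · ⟨perm(θ↑P_M)⟩ ≥ ⟨perm(θ↑P_{M+1})⟩`, i.e. the `M₁ = 1` case of
the conjecture `(perm_{B,M₁}(θ))^{M₁}·(perm_{B,M₂}(θ))^{M₂} ≥ (perm_{B,M₁+M₂}(θ))^{M₁+M₂}`. -/
theorem statement_18 (n M : ℕ) (hn : 1 ≤ n) (hM : 1 ≤ M)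
    (θ : Matrix (Fin n) (Fin n) ℝ) (hθ : ∀ i j, 0 ≤ θ i j)
    (hex : ∃ σ : Equiv.Perm (Fin n), 0 < ∏ i, θ i (σ i)) :
    avgLiftPerm n (M + 1) θ ≤ perm' θ * avgLiftPerm n M θ := by
  have hN : ((M : ℝ) + 1) ≠ 0 := by positivity
  rw [avgLiftPerm_eq_sum_blockWeight, avgLiftPerm_eq_sum_blockWeight]
  refine (Finset.sum_le_sum fun τ _ => blockWeight_succ_le hθ (blockCount τ)
    (sum_row_blockCount τ) (sum_col_blockCount τ)).trans_eq ?_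
  rw [Finset.sum_comm, perm', Finset.sum_mul]
  refine Finset.sum_congr rfl fun σ _ => ?_
  simp only [prod_blockCount_eq_sum, Finset.sum_mul, ite_mul, one_mul, zero_mul]
  rw [Finset.sum_comm]
  simp only [← Finset.sum_filter]
  have h (p : Fin n → Fin (M + 1) × Fin (M + 1)) := sum_perm_prescribed_eq σ p fun k =>
    (∏ i, θ i (σ i) * (((M : ℝ) + 1) ^ 2)⁻¹) *
      blockWeight θ M fun e => k e - if σ e.1 = e.2 then 1 else 0
  refine (Finset.sum_congr rfl fun p _ => h p).trans ?_
  simp only [Nat.add_sub_cancel, ← Finset.mul_sum, Finset.prod_mul_distrib,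
    Finset.prod_const, Finset.sum_const, Finset.card_univ, Fintype.card_pi, Fintype.card_prod,
    Fintype.card_fin, nsmul_eq_mul]
  push_cast
  rw [← pow_two, inv_pow]
  field_simp
  rw [← pow_mul, ← pow_mul, mul_comm n 2]
end
end
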